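/- arXiv:math/0703701 — 8 statements merged into one kernel-verified Lean document; each statement's English description precedes it below -/
import Mathlib

section
/- If λ →deg μ is a non-trivial degeneration of Lie algebra laws over ℂ (i.e., μ lies in the Zariski closure of O(λ) but μ ∉ O(λ)), then dim Der(λ) < dim Der(μ), where Der(ν) denotes the Lie algebra of derivations of the Lie algebra (V, ν). -/
/-!
The proof works with structure constants over `ℂ`-algebras and replaces orbit dimensions by
transcendence degrees. Linear maps `A` act infinitesimally at a point `x` (`infAct x`), and `Der(ν)`
is the kernel of `infAct` at `ν`, so a large derivation algebra means a small orbit.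

Let `P` be a generic invertible matrix, over the field `K` of rational functions in `n²` variables
(`GenericPoint`, `exists_genericPoint`). A polynomial vanishes on the orbit of `c` iff it vanishes at
the generic point `P · c` (`aeval_generic_iff`), and `P · μ` is a specialization of `P · λ` when `μ`
lies in the closure of the orbit of `λ`. Suppose `dim Der(μ) ≤ dim Der(λ)`, and let `r` be the rank
of `infAct μ`. Choose `r` linear forms detecting the range of `infAct μ` (`exists_slice`); they
still have rank `r` at `P · μ` and at `P · λ`, since this is a nonvanishing determinant condition.
Hence

* at `P · μ` the `r` forms are algebraically independent (`algebraicIndependent_linForm`);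
* all coordinates of `P · λ` are algebraic over the values of the `r` forms there, since the rank of
  `infAct λ` is at most `r` (`isAlgebraic_act`).

It follows (`aeval_eq_zero_of_dense`) that the closures of the two orbits coincide, that is, the two
generic points satisfy the same polynomial relations. They can then be identified in a nonzero
`ℂ`-algebra `T` (`exists_amalgam`), over which `λ` and `μ` are conjugate. Conjugacy is a system of
polynomial equations with complex coefficients, so the Nullstellensatz (`exists_complex_point`)
produces a complex conjugating matrix and `μ` lies in the orbit of `λ` (`exists_act_eq`).
-/

open Filter Topology


/-- The space of bilinear maps on `ℂⁿ` (candidate Lie brackets). -/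
abbrev BilMap (n : ℕ) : Type :=
  (Fin n → ℂ) →ₗ[ℂ] (Fin n → ℂ) →ₗ[ℂ] (Fin n → ℂ)

/-- A Lie algebra law: an alternating bilinear map satisfying the Jacobi identity. -/
def IsLieLaw {n : ℕ} (μ : BilMap n) : Prop :=
  (∀ x, μ x x = 0) ∧ ∀ x y z, μ x (μ y z) + μ y (μ z x) + μ z (μ x y) = 0

/-- The action of `GL(V)` on bilinear maps: `(g·μ)(x,y) = g (μ (g⁻¹x) (g⁻¹y))`. -/
noncomputable def glAct {n : ℕ} (g : (Fin n → ℂ) ≃ₗ[ℂ] (Fin n → ℂ)) (μ : BilMap n) : BilMap n :=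
  (μ.compl₁₂ (g.symm : (Fin n → ℂ) →ₗ[ℂ] (Fin n → ℂ))
      (g.symm : (Fin n → ℂ) →ₗ[ℂ] (Fin n → ℂ))).compr₂
    (g : (Fin n → ℂ) →ₗ[ℂ] (Fin n → ℂ))

/-- The `GL(V)`-orbit of a bilinear map. -/
def glOrbit {n : ℕ} (μ : BilMap n) : Set (BilMap n) :=
  Set.range fun g : (Fin n → ℂ) ≃ₗ[ℂ] (Fin n → ℂ) => glAct g μ

/-- The structure constants of a bilinear map with respect to the standard basis. -/
def structConsts {n : ℕ} (μ : BilMap n) : Fin n × Fin n × Fin n → ℂ :=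
  fun t => μ (Pi.single t.1 1) (Pi.single t.2.1 1) t.2.2

/-- The Zariski closure of a set of bilinear maps: the common zero locus of all
polynomials (in the structure-constant coordinates) vanishing on the set. -/
def zariskiClosure {n : ℕ} (S : Set (BilMap n)) : Set (BilMap n) :=
  {μ | ∀ p : MvPolynomial (Fin n × Fin n × Fin n) ℂ,
      (∀ ν ∈ S, MvPolynomial.eval (structConsts ν) p = 0) →
        MvPolynomial.eval (structConsts μ) p = 0}
/-- The space of derivations of the algebra `(V, ν)`: linear maps `D` with
`D(ν(x,y)) = ν(Dx,y) + ν(x,Dy)`. -/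
noncomputable def derivations {n : ℕ} (ν : BilMap n) :
    Submodule ℂ ((Fin n → ℂ) →ₗ[ℂ] (Fin n → ℂ)) where
  carrier := {D | ∀ x y, D (ν x y) = ν (D x) y + ν x (D y)}
  add_mem' := by
    intro a b ha hb
    intro x y
    simp only [LinearMap.add_apply, map_add, ha x y, hb x y]
    abel
  zero_mem' := by
    intro x y
    simp
  smul_mem' := by
    intro c a ha
    intro x y
    simp only [LinearMap.smul_apply, map_smul, ha x y, smul_add]

open MvPolynomial

open scoped TensorProduct

/-! ### Field theory: derivations, algebraic independence, amalgams -/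

/-- Chain rule for a derivation applied to a polynomial expression. -/
theorem aeval_derivation {σ K : Type*} [Fintype σ] [CommRing K] [Algebra ℂ K]
    (δ : Derivation ℂ K K) (y : σ → K) (q : MvPolynomial σ ℂ) :
    δ (aeval y q) = ∑ i, aeval y (pderiv i q) * δ (y i) := by
  classical
  induction q using MvPolynomial.induction_on with
  | C a =>
    simp
  | add p q hp hq =>
    simp only [map_add, hp, hq, add_mul, Finset.sum_add_distrib]
  | mul_X p i hp =>
    have h1 : ∀ j, aeval y (pderiv j (p * X i)) * δ (y j) =
        (if j = i then aeval y p * δ (y i) else 0) + y i * (aeval y (pderiv j p) * δ (y j)) := by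
      intro j
      rw [Derivation.leibniz, pderiv_X]
      by_cases hj : j = i
      · subst hj; simp; ring
      · simp [hj, Ne.symm hj]; ring
    rw [Finset.sum_congr rfl fun j _ => h1 j, Finset.sum_add_distrib, ← Finset.mul_sum, ← hp]
    simp

/-- Jacobian criterion: elements admitting a dual family of derivations are algebraically
independent. A relation of minimal degree has vanishing partial derivatives, hence is constant. -/
theorem algebraicIndependent_of_derivation {σ K : Type*} [Fintype σ] [DecidableEq σ] [CommRing K]
    [Algebra ℂ K] [Nontrivial K] (y : σ → K)
    (h : ∀ j, ∃ δ : Derivation ℂ K K, ∀ i, δ (y i) = if i = j then 1 else 0) :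
    AlgebraicIndependent ℂ y := by
  rw [algebraicIndependent_iff]
  suffices H : ∀ N (q : MvPolynomial σ ℂ), q.totalDegree ≤ N → aeval y q = 0 → q = 0 from
    fun q => H _ q le_rfl
  intro N
  induction N with
  | zero =>
    intro q hq h0
    rw [totalDegree_eq_zero_iff_eq_C.1 (Nat.le_zero.1 hq)] at h0 ⊢
    have := (algebraMap ℂ K).injective
    simp only [aeval_C] at h0
    rw [(map_eq_zero_iff _ this).1 h0, C_0]
  | succ N ih =>
    intro q hq h0
    have hd : ∀ j, pderiv j q = 0 := by
      intro j
      apply ih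
      · rw [totalDegree, Finset.sup_le_iff]
        intro m hm
        rw [mem_support_iff, coeff_pderiv] at hm
        have : m + Finsupp.single j 1 ∈ q.support := by
          rw [mem_support_iff]; exact left_ne_zero_of_mul hm
        have := (le_totalDegree this).trans hq
        rw [Finsupp.sum_add_index' (by simp) (by simp)] at this
        simpa using this
      · obtain ⟨δ, hδ⟩ := h j
        have := aeval_derivation δ y q
        simpa [h0, hδ] using this.symm
    have hC : q = C (coeff 0 q) := by
      ext m
      by_cases hm : m = 0
      · simp [hm]
      obtain ⟨j, hj⟩ : ∃ j, m j ≠ 0 := by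
        by_contra! hh; exact hm (Finsupp.ext hh)
      have h1 := coeff_pderiv (i := j) q (m - Finsupp.single j 1)
      have h2 : m - Finsupp.single j 1 + Finsupp.single j 1 = m := by
        apply tsub_add_cancel_of_le
        rw [Finsupp.single_le_iff]; omega
      rw [hd, h2, coeff_zero] at h1
      have h3 : (((m - Finsupp.single j 1 : σ →₀ ℕ) j : ℂ) + 1) ≠ 0 := Nat.cast_add_one_ne_zero _
      rw [coeff_C, if_neg (Ne.symm hm)]
      exact (mul_eq_zero.1 h1.symm).resolve_right h3
    apply ih q _ h0
    rw [hC]; simp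

theorem eq_zero_of_one_tmul_eq_zero {k K M : Type} [Field k] [Field K] [Algebra k K]
    [AddCommGroup M] [Module k M] (m : M) (h : (1 : K) ⊗ₜ[k] m = 0) : m = 0 := by
  apply Module.FaithfullyFlat.tensorProduct_mk_injective (A := k) (B := K) M
  simpa using h

theorem nontrivial_tensor {k K₁ K₂ : Type} [Field k] [Field K₁] [Field K₂] [Algebra k K₁]
    [Algebra k K₂] : Nontrivial (TensorProduct k K₁ K₂) := inferInstance

/-- In characteristic zero, an element killed by all `k`-derivations of `K` is algebraic over `k`:
with `E = k(x)`, the map `K ⊗ Ω[E⁄k] → Ω[K⁄k]` is injective, so `Ω[E⁄k] = 0`. -/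
theorem isAlgebraic_of_derivation {k K : Type} [Field k] [Field K] [Algebra k K] [CharZero k]
    [Algebra.EssFiniteType k K] (x : K) (h : ∀ δ : Derivation k K K, δ x = 0) :
    IsAlgebraic k x := by
  let E := IntermediateField.adjoin k {x}
  let x' : E := ⟨x, IntermediateField.mem_adjoin_simple_self k x⟩
  have hk : CharZero E := charZero_of_injective_algebraMap (algebraMap k E).injective
  have : Algebra.EssFiniteType E K := Algebra.EssFiniteType.of_comp k E K
  have : Algebra.FormallySmooth E K := inferInstance
  have : Algebra.EssFiniteType k E := IntermediateField.essFiniteType_iff.2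
    (IntermediateField.fg_adjoin_of_finite (Set.finite_singleton x))
  have hD : KaehlerDifferential.D k K x = 0 := by
    by_contra hne
    obtain ⟨φ, hφ⟩ := Module.Projective.exists_dual_ne_zero K hne
    exact hφ (h (φ.compDer (KaehlerDifferential.D k K)))
  have hinj : Function.Injective (KaehlerDifferential.mapBaseChange k E K) := by
    rw [injective_iff_map_eq_zero]
    intro x hx
    obtain ⟨x, rfl⟩ := (Algebra.H1Cotangent.exact_δ_mapBaseChange k E K x).mp hx
    rw [Subsingleton.elim x 0, map_zero]
  have hDx : KaehlerDifferential.D k E x' = 0 := by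
    have : (1 : K) ⊗ₜ[E] KaehlerDifferential.D k E x' = 0 := by
      apply hinj
      rw [map_zero, KaehlerDifferential.mapBaseChange_tmul, one_smul, KaehlerDifferential.map_D]
      exact hD
    exact eq_zero_of_one_tmul_eq_zero _ this
  have hall : ∀ e : E, KaehlerDifferential.D k E e = 0 := by
    rintro ⟨e, he⟩
    induction he using IntermediateField.adjoin_induction with
    | mem z hz => rw [Set.mem_singleton_iff] at hz; subst hz; exact hDx
    | algebraMap r => exact Derivation.map_algebraMap _ r
    | add a b ha hb h1 h2 =>
      have := (KaehlerDifferential.D k E).map_add ⟨a, ha⟩ ⟨b, hb⟩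
      rw [h1, h2, add_zero] at this; exact this
    | inv a ha h1 =>
      have := (KaehlerDifferential.D k E).leibniz_inv ⟨a, ha⟩
      rw [h1, smul_zero] at this; exact this
    | mul a b ha hb h1 h2 =>
      have := (KaehlerDifferential.D k E).leibniz ⟨a, ha⟩ ⟨b, hb⟩
      rw [h1, h2, smul_zero, smul_zero, add_zero] at this; exact this
  have hsub : Subsingleton (Ω[E⁄k]) := by
    rw [← Submodule.subsingleton_iff E, ← subsingleton_iff_bot_eq_top,
      ← KaehlerDifferential.span_range_derivation, eq_comm, Submodule.span_eq_bot]
    rintro _ ⟨e, rfl⟩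
    exact hall e
  have : Algebra.FormallyUnramified k E := ⟨hsub⟩
  have : Algebra.IsSeparable k E := Algebra.FormallyUnramified.isSeparable k E
  have h1 : IsAlgebraic k x' := (Algebra.IsSeparable.isIntegral k x').isAlgebraic
  exact h1.algebraMap (A := K)

/-- Two families satisfying the same polynomial relations over `ℂ` become equal in a common nonzero
algebra, namely the tensor product over the field generated by either family. -/
theorem exists_amalgam {K₁ K₂ W : Type} [Field K₁] [Field K₂] [Algebra ℂ K₁] [Algebra ℂ K₂]
    (x₁ : W → K₁) (x₂ : W → K₂)
    (h : ∀ p : MvPolynomial W ℂ, aeval x₁ p = 0 ↔ aeval x₂ p = 0) :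
    ∃ (T : Type) (_ : CommRing T) (_ : Algebra ℂ T) (_ : Nontrivial T)
      (f₁ : K₁ →ₐ[ℂ] T) (f₂ : K₂ →ₐ[ℂ] T), ∀ w, f₁ (x₁ w) = f₂ (x₂ w) := by
  let I := RingHom.ker (aeval x₁ : MvPolynomial W ℂ →ₐ[ℂ] K₁)
  have hI : I.IsPrime := RingHom.ker_isPrime _
  let R := MvPolynomial W ℂ ⧸ I
  let j₁ : R →ₐ[ℂ] K₁ := Ideal.Quotient.liftₐ I (aeval x₁) (fun a ha => ha)
  let j₂ : R →ₐ[ℂ] K₂ := Ideal.Quotient.liftₐ I (aeval x₂) (fun a ha => (h a).1 ha)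
  have hj₁ : Function.Injective j₁ := by
    rw [injective_iff_map_eq_zero]
    intro a ha
    obtain ⟨p, rfl⟩ := Ideal.Quotient.mk_surjective a
    exact Ideal.Quotient.eq_zero_iff_mem.2 ha
  have hj₂ : Function.Injective j₂ := by
    rw [injective_iff_map_eq_zero]
    intro a ha
    obtain ⟨p, rfl⟩ := Ideal.Quotient.mk_surjective a
    exact Ideal.Quotient.eq_zero_iff_mem.2 ((h p).2 ha)
  let k := FractionRing R
  let g₁ : k →ₐ[ℂ] K₁ := IsFractionRing.liftAlgHom (K := k) (g := j₁) hj₁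
  let g₂ : k →ₐ[ℂ] K₂ := IsFractionRing.liftAlgHom (K := k) (g := j₂) hj₂
  let a₁ : Algebra k K₁ := g₁.toRingHom.toAlgebra
  let a₂ : Algebra k K₂ := g₂.toRingHom.toAlgebra
  have : IsScalarTower ℂ k K₁ := IsScalarTower.of_algHom g₁
  have : IsScalarTower ℂ k K₂ := IsScalarTower.of_algHom g₂
  refine ⟨TensorProduct k K₁ K₂, inferInstance, inferInstance, nontrivial_tensor,
    Algebra.TensorProduct.includeLeft,
    (Algebra.TensorProduct.includeRight (R := k) (A := K₁) (B := K₂)).restrictScalars ℂ, ?_⟩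
  intro w
  let e : k := algebraMap R k (Ideal.Quotient.mk I (X w))
  have h1 : algebraMap k K₁ e = x₁ w := by
    change g₁ e = _
    simp only [e, g₁, IsFractionRing.liftAlgHom_apply, IsFractionRing.lift_algebraMap]
    exact aeval_X x₁ w
  have h2 : algebraMap k K₂ e = x₂ w := by
    change g₂ e = _
    simp only [e, g₂, IsFractionRing.liftAlgHom_apply, IsFractionRing.lift_algebraMap]
    exact aeval_X x₂ w
  rw [← h1, ← h2]
  simp [Algebra.TensorProduct.algebraMap_apply]

/-- Nullstellensatz: a point in a nonzero `ℂ`-algebra specializes to a complex point satisfying all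
its polynomial relations. -/
theorem exists_complex_point {T : Type} {σ : Type} [Finite σ] [CommRing T] [Algebra ℂ T]
    [Nontrivial T] (t : σ → T) :
    ∃ z : σ → ℂ, ∀ p : MvPolynomial σ ℂ, aeval t p = 0 → eval z p = 0 := by
  obtain ⟨M, hM, hle⟩ := Ideal.exists_le_maximal _
    (RingHom.ker_ne_top (aeval t : MvPolynomial σ ℂ →ₐ[ℂ] T).toRingHom)
  obtain ⟨z, rfl⟩ := (isMaximal_iff_eq_vanishingIdeal_singleton (K := ℂ)).1 hM
  refine ⟨z, fun p hp => ?_⟩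
  have := (mem_vanishingIdeal_singleton_iff z p).1 (hle hp)
  simpa [aeval_eq_eval] using this

/-! ### The action on structure constants over a commutative ring -/

/-- Indices `(i, j, k)` of structure constants: the coefficient of `e_k` in `[e_i, e_j]`. -/
abbrev Ix (n : ℕ) : Type := Fin n × Fin n × Fin n
/-- Square matrices of size `n` over `T`. -/
abbrev Mat (n : ℕ) (T : Type) : Type := Matrix (Fin n) (Fin n) T

section tensor
variable {n : ℕ} {T : Type} [CommRing T]

/-- Applies `M` to the output index of `c`, i.e. replaces `[x, y]` by `M [x, y]`. -/
def opOut (M : Mat n T) (c : Ix n → T) : Ix n → T := fun t => ∑ l, M t.2.2 l * c (t.1, t.2.1, l)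
/-- Precomposes the first argument of `c` with `M`, i.e. replaces `[x, y]` by `[M x, y]`. -/
def opFst (M : Mat n T) (c : Ix n → T) : Ix n → T := fun t => ∑ a, M a t.1 * c (a, t.2.1, t.2.2)
/-- Precomposes the second argument of `c` with `M`, i.e. replaces `[x, y]` by `[x, M y]`. -/
def opSnd (M : Mat n T) (c : Ix n → T) : Ix n → T := fun t => ∑ b, M b t.2.1 * c (t.1, b, t.2.2)

/-- Structure constants of `P [Q x, Q y]`. This is the action of `P` when `Q` is inverse to `P`;
the inverse is a separate argument so that the formula is polynomial over any ring. -/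
def act (P Q : Mat n T) (c : Ix n → T) : Ix n → T := opOut P (opFst Q (opSnd Q c))

theorem opOut_opOut (M N : Mat n T) (c : Ix n → T) : opOut M (opOut N c) = opOut (M * N) c := by
  ext t
  simp only [opOut, Matrix.mul_apply, Finset.mul_sum, Finset.sum_mul]
  rw [Finset.sum_comm]
  exact Finset.sum_congr rfl fun _ _ => Finset.sum_congr rfl fun _ _ => by ring

theorem opFst_opFst (M N : Mat n T) (c : Ix n → T) : opFst M (opFst N c) = opFst (N * M) c := by
  ext t
  simp only [opFst, Matrix.mul_apply, Finset.mul_sum, Finset.sum_mul]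
  rw [Finset.sum_comm]
  exact Finset.sum_congr rfl fun _ _ => Finset.sum_congr rfl fun _ _ => by ring

theorem opSnd_opSnd (M N : Mat n T) (c : Ix n → T) : opSnd M (opSnd N c) = opSnd (N * M) c := by
  ext t
  simp only [opSnd, Matrix.mul_apply, Finset.mul_sum, Finset.sum_mul]
  rw [Finset.sum_comm]
  exact Finset.sum_congr rfl fun _ _ => Finset.sum_congr rfl fun _ _ => by ring

theorem opOut_opFst (M N : Mat n T) (c : Ix n → T) : opOut M (opFst N c) = opFst N (opOut M c) := by
  ext t
  simp only [opOut, opFst, Finset.mul_sum]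
  rw [Finset.sum_comm]
  exact Finset.sum_congr rfl fun _ _ => Finset.sum_congr rfl fun _ _ => by ring

theorem opOut_opSnd (M N : Mat n T) (c : Ix n → T) : opOut M (opSnd N c) = opSnd N (opOut M c) := by
  ext t
  simp only [opOut, opSnd, Finset.mul_sum]
  rw [Finset.sum_comm]
  exact Finset.sum_congr rfl fun _ _ => Finset.sum_congr rfl fun _ _ => by ring

theorem opFst_opSnd (M N : Mat n T) (c : Ix n → T) : opFst M (opSnd N c) = opSnd N (opFst M c) := by
  ext t
  simp only [opFst, opSnd, Finset.mul_sum]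
  rw [Finset.sum_comm]
  exact Finset.sum_congr rfl fun _ _ => Finset.sum_congr rfl fun _ _ => by ring

theorem opOut_sub (M : Mat n T) (c d : Ix n → T) : opOut M (c - d) = opOut M c - opOut M d := by
  ext t; simp [opOut, mul_sub, Finset.sum_sub_distrib]
theorem opFst_sub (M : Mat n T) (c d : Ix n → T) : opFst M (c - d) = opFst M c - opFst M d := by
  ext t; simp [opFst, mul_sub, Finset.sum_sub_distrib]
theorem opSnd_sub (M : Mat n T) (c d : Ix n → T) : opSnd M (c - d) = opSnd M c - opSnd M d := by
  ext t; simp [opSnd, mul_sub, Finset.sum_sub_distrib]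

/-- The infinitesimal action at `x`, sending `A` to `A [u, v] - [A u, v] - [u, A v]`. Its kernel is
the space of derivations of `x`. -/
def infAct (x : Ix n → T) : Mat n T →ₗ[T] (Ix n → T) where
  toFun A := opOut A x - opFst A x - opSnd A x
  map_add' A B := by
    ext t
    simp only [opOut, opFst, opSnd, Pi.sub_apply, Pi.add_apply, Matrix.add_apply, add_mul,
      Finset.sum_add_distrib]
    ring
  map_smul' r A := by
    ext t
    simp only [opOut, opFst, opSnd, Pi.sub_apply, Pi.smul_apply, Matrix.smul_apply, smul_eq_mul,
      mul_assoc, ← Finset.mul_sum, RingHom.id_apply]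
    ring

theorem infAct_apply (x : Ix n → T) (A : Mat n T) :
    infAct x A = opOut A x - opFst A x - opSnd A x := rfl

/-- Equivariance of the infinitesimal action under conjugation. -/
theorem infAct_act (P Q A : Mat n T) (h : Q * P = 1) (c : Ix n → T) :
    infAct (act P Q c) (P * A * Q) = act P Q (infAct c A) := by
  have e1 : opOut (P * A * Q) (act P Q c) = act P Q (opOut A c) := by
    simp only [act]
    rw [opOut_opOut, mul_assoc, h, mul_one, ← opOut_opOut, opOut_opFst A, opOut_opSnd A]
  have e2 : opFst (P * A * Q) (act P Q c) = act P Q (opFst A c) := by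
    simp only [act]
    rw [← opOut_opFst, opFst_opFst, ← mul_assoc, ← mul_assoc, h, one_mul, ← opFst_opFst,
      opFst_opSnd A]
  have e3 : opSnd (P * A * Q) (act P Q c) = act P Q (opSnd A c) := by
    simp only [act]
    rw [← opOut_opSnd, ← opFst_opSnd, opSnd_opSnd, ← mul_assoc, ← mul_assoc, h, one_mul,
      ← opSnd_opSnd]
  rw [infAct_apply, e1, e2, e3, infAct_apply]
  simp only [act, opOut_sub, opFst_sub, opSnd_sub]

theorem act_zero (P Q : Mat n T) : act P Q 0 = 0 := by
  ext t; simp [act, opOut, opFst, opSnd]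

theorem act_act (P Q P' Q' : Mat n T) (c : Ix n → T) :
    act P Q (act P' Q' c) = act (P * P') (Q' * Q) c := by
  simp only [act]
  rw [← opOut_opSnd, ← opOut_opFst, opOut_opOut, ← opFst_opSnd, opFst_opFst,
    opSnd_opSnd]

theorem act_one (c : Ix n → T) : act 1 1 c = c := by
  ext t; simp [act, opOut, opFst, opSnd, Matrix.one_apply]

theorem eq_act_of_act_eq (P Q : Mat n T) (h : Q * P = 1) (c d : Ix n → T) (hcd : act P Q c = d) :
    c = act Q P d := by
  rw [← hcd, act_act, h, act_one]

theorem map_act {T' : Type} [CommRing T'] (f : T →+* T') (P Q : Mat n T) (c : Ix n → T)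
    (t : Ix n) : f (act P Q c t) = act (P.map f) (Q.map f) (f ∘ c) t := by
  simp [act, opOut, opFst, opSnd]

theorem map_infAct {T' : Type} [CommRing T'] (f : T →+* T') (x : Ix n → T) (A : Mat n T)
    (t : Ix n) : f (infAct x A t) = infAct (f ∘ x) (A.map f) t := by
  simp [infAct_apply, opOut, opFst, opSnd]

variable {R : Type} [CommRing R] [Algebra R T]

/-- Differentiating a point `P · c` of the orbit of a constant `c` gives the infinitesimal action of
the logarithmic derivative `δ(P) P⁻¹`. -/
theorem derivation_act (δ : Derivation R T T) (P Q : Mat n T) (h : P * Q = 1) (c : Ix n → R) :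
    δ ∘ act P Q (algebraMap R T ∘ c) =
      infAct (act P Q (algebraMap R T ∘ c)) (P.map δ * Q) := by
  have hQP : Q * P = 1 := mul_eq_one_comm.1 h
  have hQ : Q.map δ = -(Q * (P.map δ * Q)) := by
    have h1 : Q * P.map δ + Q.map δ * P = 0 := by
      ext i j
      have := congrArg δ (congrFun (congrFun hQP i) j)
      simp only [Matrix.mul_apply, map_sum, Derivation.leibniz, smul_eq_mul,
        Finset.sum_add_distrib] at this
      have h1 : δ ((1 : Mat n T) i j) = 0 := by
        rw [Matrix.one_apply]; split_ifs <;> simp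
      rw [h1] at this
      simp only [Matrix.add_apply, Matrix.mul_apply, Matrix.map_apply, Matrix.zero_apply]
      rw [← this]
      congr 1
      exact Finset.sum_congr rfl fun _ _ => mul_comm _ _
    calc Q.map δ = Q.map δ * P * Q := by rw [mul_assoc, h, mul_one]
      _ = _ := by rw [eq_neg_of_add_eq_zero_right h1, neg_mul, mul_assoc]
  have dOut : ∀ (M : Mat n T) (c : Ix n → T),
      δ ∘ opOut M c = opOut (M.map δ) c + opOut M (δ ∘ c) := by
    intro M c; ext t
    simp [opOut, Finset.sum_add_distrib, mul_comm, add_comm]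
  have dFst : ∀ (M : Mat n T) (c : Ix n → T),
      δ ∘ opFst M c = opFst (M.map δ) c + opFst M (δ ∘ c) := by
    intro M c; ext t
    simp [opFst, Finset.sum_add_distrib, mul_comm, add_comm]
  have dSnd : ∀ (M : Mat n T) (c : Ix n → T),
      δ ∘ opSnd M c = opSnd (M.map δ) c + opSnd M (δ ∘ c) := by
    intro M c; ext t
    simp [opSnd, Finset.sum_add_distrib, mul_comm, add_comm]
  have aOut : ∀ (M : Mat n T) (c d : Ix n → T), opOut M (c + d) = opOut M c + opOut M d := by
    intro M c d; ext t; simp [opOut, mul_add, Finset.sum_add_distrib]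
  have nFst : ∀ (M : Mat n T) (c : Ix n → T), opFst (-M) c = - opFst M c := by
    intro M c; ext t; simp [opFst]
  have nSnd : ∀ (M : Mat n T) (c : Ix n → T), opSnd (-M) c = - opSnd M c := by
    intro M c; ext t; simp [opSnd]
  have nOut' : ∀ (M : Mat n T) (c : Ix n → T), opOut M (-c) = - opOut M c := by
    intro M c; ext t; simp [opOut]
  have nFst' : ∀ (M : Mat n T) (c : Ix n → T), opFst M (-c) = - opFst M c := by
    intro M c; ext t; simp [opFst]
  have zSnd : ∀ (M : Mat n T), opSnd M (δ ∘ algebraMap R T ∘ c) = 0 := by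
    intro M; ext t; simp [opSnd]
  have hP : P.map δ = (P.map δ * Q) * P := by rw [mul_assoc, hQP, mul_one]
  generalize hA : P.map δ * Q = A at *
  simp only [act]
  rw [dOut, dFst, dSnd, zSnd, add_zero, hQ, hP, aOut, nFst, nSnd, nFst', nOut', nOut', infAct_apply,
    opOut_opOut, ← opOut_opFst P A, opFst_opFst A Q, ← opOut_opSnd P A, ← opFst_opSnd Q A,
    opSnd_opSnd A Q]
  abel

end tensor

/-! ### The generic element of `GL(n)` -/

/-- Indices of the entries of a pair of matrices. -/
abbrev PairIx (n : ℕ) : Type := (Fin n × Fin n) ⊕ (Fin n × Fin n)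

/-- The entries of a pair of matrices as one family, usable as a point of affine space. -/
def entries {n : ℕ} {T : Type} (P Q : Mat n T) : PairIx n → T :=
  Sum.elim (fun p => P p.1 p.2) (fun p => Q p.1 p.2)

/-- A generic element `P` of `GL(n)` over `K`, with inverse `Q`: the entries of `(P, Q)` satisfy
exactly those polynomial relations that hold for all complex pairs of inverse matrices, and a
`ℂ`-derivation of `K` can be prescribed freely on the entries of `P`. -/
structure GenericPoint (n : ℕ) (K : Type) [Field K] [Algebra ℂ K] where
  P : Mat n K
  Q : Mat n K
  mul_eq : P * Q = 1
  aeval_eq_zero_iff : ∀ q : MvPolynomial (PairIx n) ℂ, aeval (entries P Q) q = 0 ↔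
    ∀ g h : Mat n ℂ, g * h = 1 → eval (entries g h) q = 0
  exists_derivation : ∀ B : Mat n K, ∃ δ : Derivation ℂ K K, P.map δ = B

/-- Any polynomial in the entries of the generic matrix and of its inverse becomes, after multiplying
by a power of the determinant, a polynomial `s` in the entries of the matrix alone. The same `s`
works for every specialization to a complex invertible matrix. -/
theorem exists_clear_denominators {n : ℕ} {K : Type} [Field K] [Algebra (MvPolynomial (Fin n × Fin n) ℂ) K]
    [Algebra ℂ K] [IsScalarTower ℂ (MvPolynomial (Fin n × Fin n) ℂ) K] (Q : Mat n K)
    (hQ : (Matrix.mvPolynomialX (Fin n) (Fin n) ℂ).map (algebraMap _ K) * Q = 1)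
    (q : MvPolynomial (PairIx n) ℂ) :
    ∃ (k : ℕ) (s : MvPolynomial (Fin n × Fin n) ℂ),
      algebraMap _ K s = algebraMap _ K ((Matrix.mvPolynomialX (Fin n) (Fin n) ℂ).det ^ k) *
        aeval (entries ((Matrix.mvPolynomialX (Fin n) (Fin n) ℂ).map (algebraMap _ K)) Q) q ∧
      ∀ g h : Mat n ℂ, g * h = 1 →
        eval (fun p => g p.1 p.2) s = g.det ^ k * eval (entries g h) q := by
  have key : ∀ {T : Type} [CommRing T] (M N : Mat n T), M * N = 1 → ∀ i j,
      M.adjugate i j = M.det * N i j := by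
    intro T _ M N h i j
    have : M.adjugate = M.det • N := by
      calc M.adjugate = M.adjugate * (M * N) := by rw [h, mul_one]
        _ = M.det • N := by rw [← mul_assoc, Matrix.adjugate_mul, smul_mul_assoc, one_mul]
    rw [this]; rfl
  have hev : ∀ g : Mat n ℂ, (Matrix.mvPolynomialX (Fin n) (Fin n) ℂ).map
      (eval (fun p : Fin n × Fin n => g p.1 p.2)) = g := by
    intro g; ext i j; simp [Matrix.mvPolynomialX]
  induction q using MvPolynomial.induction_on with
  | C a =>
    refine ⟨0, C a, ?_, fun g h _ => by simp⟩
    simp only [pow_zero, map_one, one_mul, aeval_C]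
    rw [IsScalarTower.algebraMap_apply ℂ (MvPolynomial (Fin n × Fin n) ℂ) K]; rfl
  | add p q hp hq =>
    obtain ⟨k, s, hs, hs'⟩ := hp
    obtain ⟨l, t, ht, ht'⟩ := hq
    refine ⟨k + l, (Matrix.mvPolynomialX (Fin n) (Fin n) ℂ).det ^ l * s +
      (Matrix.mvPolynomialX (Fin n) (Fin n) ℂ).det ^ k * t, ?_, fun g h hgh => ?_⟩
    · simp only [map_add, map_mul, hs, ht, map_pow]; ring
    · simp only [map_add, map_mul, hs' g h hgh, ht' g h hgh, map_pow, RingHom.map_det,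
        RingHom.mapMatrix_apply, hev]; ring
  | mul_X p i hp =>
    obtain ⟨k, s, hs, hs'⟩ := hp
    rcases i with i | i
    · refine ⟨k, s * X i, ?_, fun g h hgh => ?_⟩
      · simp only [map_mul, hs, aeval_X, entries, Sum.elim_inl]
        simp [Matrix.mvPolynomialX, mul_assoc]
      · simp [hs' g h hgh, entries, mul_assoc]
    · refine ⟨k + 1, s * (Matrix.mvPolynomialX (Fin n) (Fin n) ℂ).adjugate i.1 i.2,
        ?_, fun g h hgh => ?_⟩
      · have := key _ _ hQ i.1 i.2
        rw [← RingHom.mapMatrix_apply, ← RingHom.map_adjugate, ← RingHom.map_det,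
          RingHom.mapMatrix_apply, Matrix.map_apply] at this
        simp only [map_mul, hs, aeval_X, entries, Sum.elim_inr, this, pow_succ]
        ring
      · have := key _ _ hgh i.1 i.2
        have h2 : eval (fun p : Fin n × Fin n => g p.1 p.2)
            ((Matrix.mvPolynomialX (Fin n) (Fin n) ℂ).adjugate i.1 i.2) = g.adjugate i.1 i.2 := by
          conv_rhs => rw [← hev g, ← RingHom.mapMatrix_apply, ← RingHom.map_adjugate]
          rfl
        simp only [map_mul, hs' g h hgh, h2, this, eval_X, entries, Sum.elim_inr, pow_succ]
        ring

/-- The matrix of indeterminates over the field of rational functions in `n²` variables is a generic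
element of `GL(n)`. -/
theorem exists_genericPoint (n : ℕ) :
    ∃ (K : Type) (_ : Field K) (_ : Algebra ℂ K), Algebra.EssFiniteType ℂ K ∧
      Nonempty (GenericPoint n K) := by
  let S := MvPolynomial (Fin n × Fin n) ℂ
  let K := FractionRing S
  let Xm : Mat n S := Matrix.mvPolynomialX (Fin n) (Fin n) ℂ
  let P : Mat n K := Xm.map (algebraMap S K)
  have hinj : Function.Injective (algebraMap S K) := IsFractionRing.injective S K
  have hdX : Xm.det ≠ 0 := Matrix.det_mvPolynomialX_ne_zero (Fin n) ℂ
  have hd : algebraMap S K Xm.det ≠ 0 := (map_ne_zero_iff _ hinj).2 hdX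
  have hdP : IsUnit P.det := by
    have : P.det = algebraMap S K Xm.det := by
      rw [RingHom.map_det]; rfl
    rw [this]; exact hd.isUnit
  have hPQ : P * P⁻¹ = 1 := Matrix.mul_nonsing_inv _ hdP
  have hev : ∀ g : Mat n ℂ, eval (fun p : Fin n × Fin n => g p.1 p.2) Xm.det = g.det := by
    intro g
    rw [RingHom.map_det]
    congr 1
    ext i j; simp [Xm, Matrix.mvPolynomialX]
  have : Algebra.EssFiniteType S K := Algebra.EssFiniteType.of_isLocalization K (nonZeroDivisors S)
  have : Algebra.FormallyEtale S K := Algebra.FormallyEtale.of_isLocalization (nonZeroDivisors S)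
  refine ⟨K, inferInstance, inferInstance, Algebra.EssFiniteType.comp ℂ S K, ⟨⟨P, P⁻¹, hPQ, ?_, ?_⟩⟩⟩
  · intro q
    obtain ⟨k, s, hs, hs'⟩ := exists_clear_denominators (K := K) P⁻¹ hPQ q
    constructor
    · intro h0 g h hgh
      have : s = 0 := hinj (by rw [hs, map_zero]; exact mul_eq_zero_of_right _ h0)
      have h1 := hs' g h hgh
      rw [this, map_zero] at h1
      have hg : g.det ≠ 0 := by
        intro h2
        have := congrArg Matrix.det hgh
        rw [Matrix.det_mul, h2, zero_mul, Matrix.det_one] at this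
        exact zero_ne_one this
      exact (mul_eq_zero.1 h1.symm).resolve_left (pow_ne_zero _ hg)
    · intro H
      have : s * Xm.det = 0 := by
        apply MvPolynomial.funext
        intro z
        let g : Mat n ℂ := fun i j => z (i, j)
        change eval (fun p : Fin n × Fin n => g p.1 p.2) _ = _
        rw [map_mul, hev, map_zero]
        by_cases hg : g.det = 0
        · rw [hg, mul_zero]
        · have hgh : g * g⁻¹ = 1 := Matrix.mul_nonsing_inv _ (Ne.isUnit hg)
          rw [hs' g _ hgh, H g _ hgh, mul_zero, zero_mul]
      have hs0 : s = 0 := (mul_eq_zero.1 this).resolve_right hdX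
      rw [hs0, map_zero] at hs
      refine (mul_eq_zero.1 hs.symm).resolve_left ?_
      rw [map_pow]
      exact pow_ne_zero _ hd
  · intro B
    let δ₀ : Derivation ℂ S K := mkDerivation ℂ (fun p : Fin n × Fin n => B p.1 p.2)
    let e := KaehlerDifferential.tensorKaehlerEquivOfFormallyEtale ℂ S K
    let φ : (K ⊗[S] Ω[S⁄ℂ]) →ₗ[K] K := LinearMap.liftBaseChange K δ₀.liftKaehlerDifferential
    refine ⟨(φ ∘ₗ e.symm.toLinearMap).compDer (KaehlerDifferential.D ℂ K), ?_⟩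
    ext i j
    simp only [P, Xm, Matrix.map_apply, Matrix.mvPolynomialX, Matrix.of_apply]
    change φ (e.symm (KaehlerDifferential.D ℂ K (algebraMap S K (X (i, j))))) = _
    rw [KaehlerDifferential.tensorKaehlerEquivOfFormallyEtale_symm_D_algebraMap]
    simp only [φ, δ₀, LinearMap.liftBaseChange_tmul, one_smul, Derivation.liftKaehlerDifferential_comp_D]
    exact mkDerivation_X _ _ _

/-! ### Slices, dimension counts and density -/

/-- The linear form with coefficients `W i`, as a polynomial in the structure constants. -/
noncomputable def linForm {n r : ℕ} (W : Matrix (Fin r) (Ix n) ℂ) (i : Fin r) : MvPolynomial (Ix n) ℂ :=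
  ∑ t, C (W i t) * X t

theorem aeval_linForm {n r : ℕ} {T : Type} [CommRing T] [Algebra ℂ T] (W : Matrix (Fin r) (Ix n) ℂ)
    (i : Fin r) (x : Ix n → T) :
    aeval x (linForm W i) = ∑ t, algebraMap ℂ T (W i t) * x t := by
  simp [linForm]

/-- The matrix of the composite `(linear forms W) ∘ (infAct x)` on the span of the matrices `A j`.
Its determinant is a polynomial in `x`, and its non-vanishing bounds the rank of `infAct x` below. -/
def sliceMat {n r : ℕ} {T : Type} [CommRing T] [Algebra ℂ T] (W : Matrix (Fin r) (Ix n) ℂ)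
    (A : Fin r → Mat n ℂ) (x : Ix n → T) : Matrix (Fin r) (Fin r) T :=
  Matrix.of fun i j => ∑ t, algebraMap ℂ T (W i t) * infAct x ((A j).map (algebraMap ℂ T)) t

theorem aeval_det_sliceMat {n r : ℕ} {T : Type} [CommRing T] [Algebra ℂ T]
    (W : Matrix (Fin r) (Ix n) ℂ) (A : Fin r → Mat n ℂ) (x : Ix n → T) :
    aeval x (sliceMat W A (X : Ix n → MvPolynomial (Ix n) ℂ)).det = (sliceMat W A x).det := by
  rw [AlgHom.map_det]
  congr 1
  ext i j
  have h1 : ∀ t, aeval x (infAct X ((A j).map (algebraMap ℂ (MvPolynomial (Ix n) ℂ))) t) =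
      infAct x ((A j).map (algebraMap ℂ T)) t := by
    intro t
    have := map_infAct (aeval x : MvPolynomial (Ix n) ℂ →ₐ[ℂ] T).toRingHom X
      ((A j).map (algebraMap ℂ (MvPolynomial (Ix n) ℂ))) t
    refine Eq.trans this ?_
    have e1 : ((aeval x : MvPolynomial (Ix n) ℂ →ₐ[ℂ] T).toRingHom : _ → T) ∘ X = x := by
      funext t; simp
    have e2 : ((A j).map (algebraMap ℂ (MvPolynomial (Ix n) ℂ))).map
        (aeval x : MvPolynomial (Ix n) ℂ →ₐ[ℂ] T).toRingHom = (A j).map (algebraMap ℂ T) := by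
      ext a b; simp
    rw [e1, e2]
  simp only [AlgHom.mapMatrix_apply, Matrix.map_apply, sliceMat, Matrix.of_apply, map_sum, map_mul,
    h1, AlgHom.commutes]

/-- A basis of the range of `infAct c` yields `r = rank (infAct c)` matrices and `r` dual linear
forms. -/
theorem exists_slice {n : ℕ} (c : Ix n → ℂ) :
    ∃ (r : ℕ) (W : Matrix (Fin r) (Ix n) ℂ) (A : Fin r → Mat n ℂ),
      r + Module.finrank ℂ (LinearMap.ker (infAct c)) = n * n ∧ sliceMat W A c = 1 := by
  let f := infAct c
  let b := Module.finBasis ℂ (LinearMap.range f)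
  choose A hA using fun i => (b i).2
  choose φ hφ using fun i => (b.coord i).exists_extend
  refine ⟨_, Matrix.of fun i t => φ i (Pi.single t 1), A, ?_, ?_⟩
  · rw [LinearMap.finrank_range_add_finrank_ker, Module.finrank_matrix]
    simp
  · ext i j
    have h1 : ∀ x : Ix n → ℂ, ∑ t, φ i (Pi.single t 1) * x t = φ i x := by
      intro x
      conv_rhs => rw [pi_eq_sum_univ' x, map_sum]
      refine Finset.sum_congr rfl fun t _ => ?_
      rw [map_smul, smul_eq_mul, mul_comm]
    have h2 : (A j).map (RingHom.id ℂ) = A j := by ext; simp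
    simp only [sliceMat, Matrix.of_apply, Algebra.algebraMap_self, RingHom.id_apply, h1, h2]
    have := LinearMap.congr_fun (hφ i) (b j)
    simp only [LinearMap.comp_apply, Submodule.subtype_apply, ← hA] at this
    refine this.trans ?_
    rw [Module.Basis.coord_apply, Module.Basis.repr_self, Matrix.one_apply,
      Finsupp.single_apply]
    simp [eq_comm]

/-- At the generic point of the orbit of `c` the forms `W` are algebraically independent: moving in the
directions `A` changes them independently. -/
theorem algebraicIndependent_linForm {n r : ℕ} {K : Type} [Field K] [Algebra ℂ K]
    (G : GenericPoint n K) (c : Ix n → ℂ) (W : Matrix (Fin r) (Ix n) ℂ) (A : Fin r → Mat n ℂ)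
    (hdet : (sliceMat W A (act G.P G.Q (algebraMap ℂ K ∘ c))).det ≠ 0) :
    AlgebraicIndependent ℂ
      fun i => aeval (act G.P G.Q (algebraMap ℂ K ∘ c)) (linForm W i) := by
  apply algebraicIndependent_of_derivation
  intro j
  set x := act G.P G.Q (algebraMap ℂ K ∘ c) with hx
  let M := sliceMat W A x
  let B : Mat n K := ∑ l, M⁻¹ l j • (A l).map (algebraMap ℂ K)
  obtain ⟨δ, hδ⟩ := G.exists_derivation (B * G.P)
  refine ⟨δ, fun i => ?_⟩
  have h1 := derivation_act δ G.P G.Q G.mul_eq c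
  rw [hδ, mul_assoc, G.mul_eq, mul_one, ← hx] at h1
  have h2 : ∀ t, δ (x t) = infAct x B t := fun t => congrFun h1 t
  have h3 : (M * M⁻¹) i j = (1 : Matrix (Fin r) (Fin r) K) i j := by
    rw [Matrix.mul_nonsing_inv _ (Ne.isUnit hdet)]
  rw [Matrix.one_apply, Matrix.mul_apply] at h3
  rw [aeval_linForm, map_sum, ← h3]
  simp only [Derivation.leibniz, Derivation.map_algebraMap, mul_zero, add_zero, h2, smul_eq_mul, B,
    map_sum, map_smul, Finset.sum_apply, Pi.smul_apply, Finset.mul_sum]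
  rw [Finset.sum_comm]
  refine Finset.sum_congr rfl fun l _ => ?_
  simp only [M, sliceMat, Matrix.of_apply, Finset.sum_mul]
  exact Finset.sum_congr rfl fun t _ => by ring

/-- The kernel of the infinitesimal action at a translate, over an extension field, is at least as large
as at the original point: conjugation carries derivations to derivations. -/
theorem finrank_ker_infAct_le {n : ℕ} {K : Type} [Field K] [Algebra ℂ K]
    (P Q : Mat n K) (hPQ : P * Q = 1) (c : Ix n → ℂ) :
    Module.finrank ℂ (LinearMap.ker (infAct c)) ≤
      Module.finrank K (LinearMap.ker (infAct (act P Q (algebraMap ℂ K ∘ c)))) := by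
  have hQP : Q * P = 1 := mul_eq_one_comm.1 hPQ
  let b := Module.finBasis ℂ (LinearMap.ker (infAct c))
  let D : Fin (Module.finrank ℂ (LinearMap.ker (infAct c))) → Mat n ℂ := fun i => b i
  have hD : LinearIndependent ℂ D :=
    b.linearIndependent.map' (Submodule.subtype _) (Submodule.ker_subtype _)
  have hDK : LinearIndependent K fun i => (D i).map (algebraMap ℂ K) := by
    let e₀ : Mat n ℂ ≃ₗ[ℂ] (Fin n × Fin n → ℂ) := (LinearEquiv.curry ℂ ℂ (Fin n) (Fin n)).symm
    let e₁ : Mat n K ≃ₗ[K] (Fin n × Fin n → K) := (LinearEquiv.curry K K (Fin n) (Fin n)).symm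
    have h0 := hD.map' e₀.toLinearMap e₀.ker
    rw [← linearIndependent_algebraMap_comp_iff (S := K)] at h0
    exact (LinearMap.linearIndependent_iff e₁.toLinearMap e₁.ker).1 h0
  let e : Mat n K →ₗ[K] Mat n K := (LinearMap.mulLeft K P) ∘ₗ (LinearMap.mulRight K Q)
  have he : ∀ M, e M = P * M * Q := fun M => (mul_assoc _ _ _).symm
  have heinj : LinearMap.ker e = ⊥ := by
    rw [LinearMap.ker_eq_bot']
    intro M hM
    rw [he] at hM
    calc M = Q * P * M * (Q * P) := by rw [hQP, one_mul, mul_one]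
      _ = Q * (P * M * Q) * P := by noncomm_ring
      _ = 0 := by rw [hM]; simp
  have hE := hDK.map' e heinj
  have hmem : ∀ i, e ((D i).map (algebraMap ℂ K)) ∈
      LinearMap.ker (infAct (act P Q (algebraMap ℂ K ∘ c))) := by
    intro i
    rw [LinearMap.mem_ker, he, infAct_act P Q _ hQP]
    have : infAct (algebraMap ℂ K ∘ c) ((D i).map (algebraMap ℂ K)) = 0 := by
      ext t
      rw [← map_infAct, show infAct c (D i) = 0 from (b i).2]
      simp
    rw [this, act_zero]
  have hF : LinearIndependent K fun i => (⟨_, hmem i⟩ :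
      LinearMap.ker (infAct (act P Q (algebraMap ℂ K ∘ c)))) :=
    LinearIndependent.of_comp (Submodule.subtype _) hE
  simpa using hF.fintype_card_le_finrank

/-- If the forms `W` have rank `r` at a translate `x` of `c` and `infAct c` has rank at most `r`, then the
coordinates of `x` are algebraic over the field generated by the values of these forms. A derivation
that kills the values acts as `infAct x B`, where `B` lies in the kernel of `W ∘ infAct x`; by
dimension count this equals the kernel of `infAct x`, so the derivation kills `x` as well. -/
theorem isAlgebraic_act {n r : ℕ} {K : Type} [Field K] [Algebra ℂ K] [Algebra.EssFiniteType ℂ K]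
    (P Q : Mat n K) (hPQ : P * Q = 1) (c : Ix n → ℂ) (W : Matrix (Fin r) (Ix n) ℂ)
    (A : Fin r → Mat n ℂ) (hdet : (sliceMat W A (act P Q (algebraMap ℂ K ∘ c))).det ≠ 0)
    (hdim : n * n ≤ r + Module.finrank ℂ (LinearMap.ker (infAct c))) (t : Ix n) :
    IsAlgebraic (IntermediateField.adjoin ℂ
      (Set.range fun i => aeval (act P Q (algebraMap ℂ K ∘ c)) (linForm W i)))
      (act P Q (algebraMap ℂ K ∘ c) t) := by
  have hker := finrank_ker_infAct_le P Q hPQ c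
  have hder := fun δ : Derivation ℂ K K => derivation_act δ P Q hPQ c
  set x := act P Q (algebraMap ℂ K ∘ c) with hx
  set k := IntermediateField.adjoin ℂ (Set.range fun i => aeval x (linForm W i)) with hk
  have : Algebra.EssFiniteType k K := Algebra.EssFiniteType.of_comp ℂ k K
  have : CharZero k := charZero_of_injective_algebraMap (algebraMap ℂ k).injective
  apply isAlgebraic_of_derivation
  intro δ
  let L : (Ix n → K) →ₗ[K] (Fin r → K) := Matrix.mulVecLin (W.map (algebraMap ℂ K))
  let f : Mat n K →ₗ[K] (Fin r → K) := L ∘ₗ infAct x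
  have hf : Function.Surjective f := by
    intro v
    refine ⟨∑ l, ((sliceMat W A x)⁻¹.mulVec v) l • (A l).map (algebraMap ℂ K), ?_⟩
    have h1 : ∀ l, f ((A l).map (algebraMap ℂ K)) = fun i => sliceMat W A x i l := by
      intro l; ext i
      simp [f, L, Matrix.mulVec, dotProduct, sliceMat]
    have h2 : (sliceMat W A x).mulVec ((sliceMat W A x)⁻¹.mulVec v) = v := by
      rw [Matrix.mulVec_mulVec, Matrix.mul_nonsing_inv _ (Ne.isUnit hdet), Matrix.one_mulVec]
    rw [map_sum]
    conv_rhs => rw [← h2]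
    ext i
    simp only [map_smul, h1, Finset.sum_apply, Pi.smul_apply, smul_eq_mul, Matrix.mulVec,
      dotProduct]
    exact Finset.sum_congr rfl fun _ _ => mul_comm _ _
  have hrank : r + Module.finrank K (LinearMap.ker f) = n * n := by
    have h1 := LinearMap.finrank_range_add_finrank_ker f
    rw [LinearMap.range_eq_top.2 hf, finrank_top, Module.finrank_matrix] at h1
    simpa using h1
  have hkereq : LinearMap.ker (infAct x) = LinearMap.ker f :=
    Submodule.eq_of_le_of_finrank_le (LinearMap.ker_le_ker_comp _ _) (by omega)
  have h1 := hder (δ.restrictScalars ℂ)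
  have h2 : P.map (δ.restrictScalars ℂ) * Q ∈ LinearMap.ker f := by
    rw [LinearMap.mem_ker]
    ext i
    have h3 : δ (aeval x (linForm W i)) = 0 := by
      have : aeval x (linForm W i) ∈ k := IntermediateField.subset_adjoin _ _ ⟨i, rfl⟩
      exact δ.map_algebraMap (⟨_, this⟩ : k)
    have h4 : (δ.restrictScalars ℂ) (aeval x (linForm W i)) = 0 := h3
    rw [aeval_linForm, map_sum] at h4
    simp only [Derivation.leibniz, Derivation.map_algebraMap, mul_zero, add_zero,
      smul_eq_mul] at h4
    simp only [f, LinearMap.comp_apply, ← h1]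
    exact h4
  rw [← hkereq, LinearMap.mem_ker, ← h1] at h2
  exact congrFun h2 t

open scoped IntermediateField.algebraAdjoinAdjoin in
/-- Let `x₂` be a specialization of `x₁`. If `x₁` is algebraic over the values of the functions `Y` at
`x₁`, and these functions are algebraically independent at `x₂`, then `x₁` is also a specialization
of `x₂`: closed irreducible sets of equal dimension, one inside the other, coincide. -/
theorem aeval_eq_zero_of_dense {r : ℕ} {K ι : Type} [Field K] [Algebra ℂ K] (x₁ x₂ : ι → K)
    (Y : Fin r → MvPolynomial ι ℂ) (h12 : ∀ p : MvPolynomial ι ℂ, aeval x₁ p = 0 → aeval x₂ p = 0)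
    (halg : ∀ t, IsAlgebraic (IntermediateField.adjoin ℂ (Set.range fun i => aeval x₁ (Y i)))
      (x₁ t))
    (hind : AlgebraicIndependent ℂ fun i => aeval x₂ (Y i))
    (p : MvPolynomial ι ℂ) (hp : aeval x₂ p = 0) : aeval x₁ p = 0 := by
  by_contra hne
  let y : Fin r → K := fun i => aeval x₁ (Y i)
  have h1 : IsAlgebraic (IntermediateField.adjoin ℂ (Set.range y)) (aeval x₁ p) := by
    clear hne hp
    induction p using MvPolynomial.induction_on with
    | C a =>
      rw [aeval_C, IsScalarTower.algebraMap_apply ℂ (IntermediateField.adjoin ℂ (Set.range y)) K]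
      exact isAlgebraic_algebraMap _
    | add p q hp hq => rw [map_add]; exact hp.add hq
    | mul_X p i hp => rw [map_mul, aeval_X]; exact hp.mul (halg i)
  have h2 : IsAlgebraic (Algebra.adjoin ℂ (Set.range y)) (aeval x₁ p) := by
    exact (IsFractionRing.isAlgebraic_iff (Algebra.adjoin ℂ (Set.range y))
      (IntermediateField.adjoin ℂ (Set.range y)) K).2 h1
  obtain ⟨q, hq0, hq⟩ := h2.exists_nonzero_coeff_and_aeval_eq_zero
    (mem_nonZeroDivisors_of_ne_zero hne)
  have h3 : ∀ i, ∃ c : MvPolynomial (Fin r) ℂ, aeval y c = (q.coeff i : K) := by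
    intro i
    exact (Algebra.adjoin_range_eq_range_aeval ℂ y).le (q.coeff i).2
  choose c hc using h3
  -- a relation for `p` over `ℂ[Y]` that holds at `x₁`, with constant term `c 0` nonzero at `x₁`
  let F : MvPolynomial ι ℂ := ∑ i ∈ Finset.range (q.natDegree + 1), bind₁ Y (c i) * p ^ i
  have hbind : ∀ (x : ι → K) (s : MvPolynomial (Fin r) ℂ),
      aeval x (bind₁ Y s) = aeval (fun i => aeval x (Y i)) s := fun x s => aeval_bind₁ _ _ _
  have hF1 : aeval x₁ F = 0 := by
    rw [Polynomial.aeval_eq_sum_range] at hq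
    simp only [F, map_sum, map_mul, map_pow, hbind]
    rw [← hq]
    refine Finset.sum_congr rfl fun i _ => ?_
    rw [show aeval (fun i => aeval x₁ (Y i)) (c i) = (q.coeff i : K) from hc i]
    rfl
  have hF2 := h12 F hF1
  simp only [F, map_sum, map_mul, map_pow, hbind, hp] at hF2
  rw [Finset.sum_range_succ', Finset.sum_eq_zero (fun i _ => by simp)] at hF2
  simp only [pow_zero, mul_one, zero_add] at hF2
  have hc0 : c 0 = 0 := (algebraicIndependent_iff.1 hind) _ hF2
  apply hq0
  have := hc 0
  rw [hc0, map_zero] at this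
  exact Subtype.ext this.symm

/-! ### From bilinear maps to structure constants -/

theorem structConsts_injective {n : ℕ} : Function.Injective (structConsts (n := n)) := by
  intro μ ν h
  refine LinearMap.pi_ext' fun i => LinearMap.ext_ring ?_
  refine LinearMap.pi_ext' fun j => LinearMap.ext_ring ?_
  ext k
  exact congrFun h (i, j, k)

theorem apply_eq_sum {n : ℕ} {V : Type} [AddCommGroup V] [Module ℂ V] (φ : (Fin n → ℂ) →ₗ[ℂ] V)
    (x : Fin n → ℂ) : φ x = ∑ a, x a • φ (Pi.single a 1) := by
  conv_lhs => rw [pi_eq_sum_univ' x, map_sum]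
  exact Finset.sum_congr rfl fun a _ => map_smul _ _ _

theorem opOut_structConsts {n : ℕ} (M : Mat n ℂ) (ν : BilMap n) :
    opOut M (structConsts ν) = structConsts (ν.compr₂ (Matrix.toLin' M)) := by
  ext t
  simp [opOut, structConsts, Matrix.mulVec, dotProduct]

theorem opFst_structConsts {n : ℕ} (M : Mat n ℂ) (ν : BilMap n) :
    opFst M (structConsts ν) = structConsts (ν.comp (Matrix.toLin' M)) := by
  ext t
  simp only [opFst, structConsts, LinearMap.comp_apply]
  rw [apply_eq_sum ν]
  simp [LinearMap.sum_apply]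

theorem opSnd_structConsts {n : ℕ} (M : Mat n ℂ) (ν : BilMap n) :
    opSnd M (structConsts ν) = structConsts (ν.compl₂ (Matrix.toLin' M)) := by
  ext t
  simp only [opSnd, structConsts, LinearMap.compl₂_apply]
  rw [apply_eq_sum (ν (Pi.single t.1 1))]
  simp

theorem structConsts_sub {n : ℕ} (μ ν : BilMap n) :
    structConsts (μ - ν) = structConsts μ - structConsts ν := rfl

theorem structConsts_glAct {n : ℕ} (g : (Fin n → ℂ) ≃ₗ[ℂ] (Fin n → ℂ)) (ν : BilMap n) :
    structConsts (glAct g ν) =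
      act (LinearMap.toMatrix' g.toLinearMap) (LinearMap.toMatrix' g.symm.toLinearMap)
        (structConsts ν) := by
  rw [act, opSnd_structConsts, opFst_structConsts, opOut_structConsts]
  simp only [Matrix.toLin'_toMatrix']
  rfl

theorem mem_derivations_iff {n : ℕ} (ν : BilMap n) (D : (Fin n → ℂ) →ₗ[ℂ] (Fin n → ℂ)) :
    D ∈ derivations ν ↔ infAct (structConsts ν) (LinearMap.toMatrix' D) = 0 := by
  rw [infAct_apply, opSnd_structConsts, opFst_structConsts, opOut_structConsts,
    ← structConsts_sub, ← structConsts_sub, Matrix.toLin'_toMatrix']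
  have h0 : (0 : Ix n → ℂ) = structConsts (0 : BilMap n) := rfl
  rw [h0, structConsts_injective.eq_iff]
  constructor
  · intro h
    refine LinearMap.ext fun x => LinearMap.ext fun y => ?_
    have := h x y
    simp [this]
  · intro h x y
    have := LinearMap.congr_fun (LinearMap.congr_fun h x) y
    simp only [LinearMap.sub_apply, LinearMap.compr₂_apply, LinearMap.comp_apply,
      LinearMap.zero_apply, sub_sub, sub_eq_zero] at this
    exact this

/-- `dim Der(ν)` is the nullity of the infinitesimal action at `ν`. -/
theorem finrank_derivations {n : ℕ} (ν : BilMap n) :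
    Module.finrank ℂ (derivations ν) =
      Module.finrank ℂ (LinearMap.ker (infAct (structConsts ν))) := by
  rw [← LinearEquiv.finrank_map_eq
    (LinearMap.toMatrix' : ((Fin n → ℂ) →ₗ[ℂ] (Fin n → ℂ)) ≃ₗ[ℂ] Mat n ℂ) (derivations ν)]
  suffices H : (derivations ν).map
      (LinearMap.toMatrix' : ((Fin n → ℂ) →ₗ[ℂ] (Fin n → ℂ)) ≃ₗ[ℂ] Mat n ℂ).toLinearMap =
      LinearMap.ker (infAct (structConsts ν)) by rw [← H]
  ext M
  rw [LinearMap.mem_ker, Submodule.mem_map]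
  constructor
  · rintro ⟨D, hD, rfl⟩
    exact (mem_derivations_iff ν D).1 hD
  · intro h
    refine ⟨Matrix.toLin' M, (mem_derivations_iff _ _).2 ?_, LinearMap.toMatrix'_toLin' M⟩
    rw [LinearMap.toMatrix'_toLin']; exact h

theorem exists_structConsts_glAct {n : ℕ} (g h : Mat n ℂ) (hgh : g * h = 1) (ν : BilMap n) :
    ∃ ν' ∈ glOrbit ν, structConsts ν' = act g h (structConsts ν) := by
  let e : (Fin n → ℂ) ≃ₗ[ℂ] (Fin n → ℂ) :=
    Matrix.toLin'OfInv (mul_eq_one_comm.1 hgh) hgh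
  refine ⟨glAct e ν, ⟨e, rfl⟩, ?_⟩
  rw [structConsts_glAct]
  have h1 : e.toLinearMap = Matrix.toLin' g := LinearMap.ext fun _ => rfl
  have h2 : e.symm.toLinearMap = Matrix.toLin' h := LinearMap.ext fun _ => rfl
  rw [h1, h2, LinearMap.toMatrix'_toLin', LinearMap.toMatrix'_toLin']

theorem exists_act_of_mem_glOrbit {n : ℕ} {ν ν' : BilMap n} (h : ν' ∈ glOrbit ν) :
    ∃ P Q : Mat n ℂ, P * Q = 1 ∧ structConsts ν' = act P Q (structConsts ν) := by
  obtain ⟨g, rfl⟩ := h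
  refine ⟨_, _, ?_, structConsts_glAct g ν⟩
  rw [← LinearMap.toMatrix'_comp]
  simp

/-! ### Equal kernel dimensions force equal orbits -/

/-- The coordinates of `P · c` as polynomials in the entries of `P` and of its inverse. -/
noncomputable def actPoly {n : ℕ} (c : Ix n → ℂ) : Ix n → MvPolynomial (PairIx n) ℂ :=
  act (Matrix.of fun i j => X (Sum.inl (i, j))) (Matrix.of fun i j => X (Sum.inr (i, j))) (C ∘ c)

theorem aeval_actPoly {n : ℕ} {T : Type} [CommRing T] [Algebra ℂ T] (P Q : Mat n T)
    (c : Ix n → ℂ) (t : Ix n) :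
    aeval (entries P Q) (actPoly c t) = act P Q (algebraMap ℂ T ∘ c) t := by
  refine (map_act (aeval (entries P Q) : MvPolynomial (PairIx n) ℂ →ₐ[ℂ] T).toRingHom _ _ _
    t).trans ?_
  congr 1
  · ext i j; simp [entries]
  · ext i j; simp [entries]
  · funext t; simp

theorem aeval_act {n : ℕ} {T : Type} [CommRing T] [Algebra ℂ T] (P Q : Mat n T)
    (c : Ix n → ℂ) (p : MvPolynomial (Ix n) ℂ) :
    aeval (act P Q (algebraMap ℂ T ∘ c)) p = aeval (entries P Q) (bind₁ (actPoly c) p) := by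
  rw [aeval_bind₁]
  simp only [aeval_actPoly]

/-- A polynomial vanishes at the generic point of the orbit of `c` iff it vanishes on the whole
orbit. -/
theorem aeval_generic_iff {n : ℕ} {K : Type} [Field K] [Algebra ℂ K] (G : GenericPoint n K)
    (c : Ix n → ℂ) (p : MvPolynomial (Ix n) ℂ) :
    aeval (act G.P G.Q (algebraMap ℂ K ∘ c)) p = 0 ↔
      ∀ g h : Mat n ℂ, g * h = 1 → eval (act g h c) p = 0 := by
  rw [aeval_act, G.aeval_eq_zero_iff]
  refine forall_congr' fun g => forall_congr' fun h => forall_congr' fun _ => ?_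
  rw [← aeval_eq_eval, ← aeval_eq_eval]
  rw [← aeval_act]
  rfl

/-- If `d` lies in the closure of the orbit of `c` and its stabilizer algebra is not larger than that of
`c`, then `d` lies in the orbit of `c`. -/
theorem exists_act_eq {n : ℕ} (c d : Ix n → ℂ)
    (hcl : ∀ p : MvPolynomial (Ix n) ℂ,
      (∀ g h : Mat n ℂ, g * h = 1 → eval (act g h c) p = 0) → eval d p = 0)
    (hdim : Module.finrank ℂ (LinearMap.ker (infAct d)) ≤
      Module.finrank ℂ (LinearMap.ker (infAct c))) :
    ∃ P Q : Mat n ℂ, P * Q = 1 ∧ act P Q c = d := by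
  obtain ⟨K, _, _, _, ⟨G⟩⟩ := exists_genericPoint n
  obtain ⟨r, W, A, hr, hW⟩ := exists_slice d
  set x₁ := act G.P G.Q (algebraMap ℂ K ∘ c) with hx₁
  set x₂ := act G.P G.Q (algebraMap ℂ K ∘ d) with hx₂
  have h12 : ∀ p : MvPolynomial (Ix n) ℂ, aeval x₁ p = 0 → aeval x₂ p = 0 := by
    intro p hp
    rw [hx₁, aeval_generic_iff] at hp
    rw [hx₂, aeval_generic_iff]
    intro g h hgh
    -- the polynomial `x ↦ p (g · x)`, which vanishes on the orbit of `c`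
    let p' : MvPolynomial (Ix n) ℂ := bind₁ (act (g.map C) (h.map C) X) p
    have hp' : ∀ x : Ix n → ℂ, eval x p' = eval (act g h x) p := by
      intro x
      rw [← aeval_eq_eval, ← aeval_eq_eval]
      rw [aeval_bind₁]
      congr 2
      funext t
      refine (map_act (aeval x : MvPolynomial (Ix n) ℂ →ₐ[ℂ] ℂ).toRingHom _ _ _ t).trans ?_
      congr 1
      · ext i j; simp
      · ext i j; simp
      · funext t; simp
    rw [← hp']
    apply hcl
    intro g' h' hgh'
    rw [hp', act_act]
    apply hp
    rw [mul_assoc, ← mul_assoc g', hgh', one_mul, hgh]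
  have hdet₂ : (sliceMat W A x₂).det ≠ 0 := by
    intro h0
    rw [← aeval_det_sliceMat, hx₂, aeval_generic_iff] at h0
    have h1 := h0 1 1 (one_mul 1)
    rw [act_one, ← aeval_eq_eval] at h1
    have h2 := (aeval_det_sliceMat W A d).symm.trans h1
    rw [hW, Matrix.det_one] at h2
    exact one_ne_zero h2
  have hdet₁ : (sliceMat W A x₁).det ≠ 0 := by
    intro h0
    rw [← aeval_det_sliceMat] at h0
    exact hdet₂ ((aeval_det_sliceMat W A x₂).symm.trans (h12 _ h0))
  have h21 : ∀ p : MvPolynomial (Ix n) ℂ, aeval x₂ p = 0 → aeval x₁ p = 0 :=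
    aeval_eq_zero_of_dense x₁ x₂ (linForm W) h12
      (isAlgebraic_act G.P G.Q G.mul_eq c W A hdet₁ (by omega))
      (algebraicIndependent_linForm G d W A hdet₂)
  -- the two generic points satisfy the same relations, so they can be identified in some `T`,
  -- which makes `d` a translate of `c` over `T`
  obtain ⟨T, _, _, _, f₁, f₂, hf⟩ := exists_amalgam x₁ x₂ fun p => ⟨h12 p, h21 p⟩
  let P₁ := G.P.map f₁
  let Q₁ := G.Q.map f₁
  let P₂ := G.P.map f₂
  let Q₂ := G.Q.map f₂
  have e₁ : P₁ * Q₁ = 1 := by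
    have := congrArg f₁.mapMatrix G.mul_eq
    rwa [map_mul, map_one] at this
  have e₂ : P₂ * Q₂ = 1 := by
    have := congrArg f₂.mapMatrix G.mul_eq
    rwa [map_mul, map_one] at this
  have e₂' := mul_eq_one_comm.1 e₂
  have hmap : ∀ (f : K →ₐ[ℂ] T) (c : Ix n → ℂ) (t : Ix n),
      f (act G.P G.Q (algebraMap ℂ K ∘ c) t) =
        act (G.P.map f) (G.Q.map f) (algebraMap ℂ T ∘ c) t := by
    intro f c t
    refine (map_act f.toRingHom _ _ _ t).trans ?_
    congr 1
    funext t; simp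
  have hact : act P₂ Q₂ (algebraMap ℂ T ∘ d) = act P₁ Q₁ (algebraMap ℂ T ∘ c) := by
    funext t
    rw [← hmap f₁, ← hmap f₂, hf]
  have hd := eq_act_of_act_eq P₂ Q₂ e₂' _ _ hact
  rw [act_act] at hd
  have hPQ : (Q₂ * P₁) * (Q₁ * P₂) = 1 := by
    rw [mul_assoc, ← mul_assoc P₁, e₁, one_mul, e₂']
  obtain ⟨z, hz⟩ := exists_complex_point (entries (Q₂ * P₁) (Q₁ * P₂))
  let P : Mat n ℂ := Matrix.of fun i j => z (Sum.inl (i, j))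
  let Q : Mat n ℂ := Matrix.of fun i j => z (Sum.inr (i, j))
  have hzPQ : z = entries P Q := by
    funext s
    rcases s with s | s <;> rfl
  refine ⟨P, Q, ?_, ?_⟩
  · ext i j
    have := hz ((∑ l, X (Sum.inl (i, l)) * X (Sum.inr (l, j))) - C ((1 : Mat n ℂ) i j)) ?_
    · simpa [sub_eq_zero, Matrix.mul_apply, P, Q] using this
    · have h1 := congrFun (congrFun hPQ i) j
      rw [Matrix.mul_apply] at h1
      simp only [map_sub, map_sum, map_mul, aeval_X, entries, Sum.elim_inl, Sum.elim_inr, aeval_C,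
        h1]
      rw [Matrix.one_apply, Matrix.one_apply]
      split_ifs <;> simp
  · funext t
    have := hz (actPoly c t - C (d t)) ?_
    · rw [map_sub, eval_C, sub_eq_zero, ← aeval_eq_eval, hzPQ] at this
      rw [← this]
      exact (aeval_actPoly P Q c t).symm
    · rw [map_sub, aeval_actPoly, ← hd, aeval_C, Function.comp_apply, sub_self]

/-- If `λ →deg μ` is a non-trivial degeneration of Lie algebra laws over
`ℂ` (`μ` in the Zariski closure of `O(λ)` but `μ ∉ O(λ)`), then
`dim Der(λ) < dim Der(μ)`. -/
theorem derivation_dim_lt_of_nontrivial_degeneration (n : ℕ) (lam mu : BilMap n)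
    (hlam : IsLieLaw lam) (hmu : IsLieLaw mu)
    (hdeg : mu ∈ zariskiClosure (glOrbit lam)) (hnontriv : mu ∉ glOrbit lam) :
    Module.finrank ℂ (derivations lam) < Module.finrank ℂ (derivations mu) := by
  by_contra! hle
  rw [finrank_derivations, finrank_derivations] at hle
  obtain ⟨P, Q, hPQ, hact⟩ := exists_act_eq (structConsts lam) (structConsts mu) (fun p hp => by
    refine hdeg p fun ν hν => ?_
    obtain ⟨g, h, hgh, e⟩ := exists_act_of_mem_glOrbit hν
    rw [e]
    exact hp g h hgh) hle
  obtain ⟨ν, hν, e⟩ := exists_structConsts_glAct P Q hPQ lam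
  rw [hact] at e
  exact hnontriv (structConsts_injective e ▸ hν)
end

section
/- If λ →deg μ is a degeneration of Lie algebra laws over ℂ, then for every i ≥ 0 the terms of the lower central series satisfy dim λⁱ ≥ dim μⁱ, where λ⁰ = V and λⁱ = [λ, λ^{i−1}] is the span of all λ(x, y) with y ∈ λ^{i−1}. -/
/-!
The dimension of `νⁱ` is lower semicontinuous in `ν`. Indeed `νⁱ` is spanned by the nested brackets
`ν(e_{a₁}, ν(e_{a₂}, … ν(e_{aᵢ}, e_j)))` of standard basis vectors (`lowerCentral_le_span_word`,
`word_mem_lowerCentral`), whose coordinates are polynomials in the structure constants of `ν`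
(`eval_wordPoly`). Choose nested brackets forming a basis of `μⁱ` and a linear map `f` sending this
basis to the standard basis of `ℂᵈ`, where `d = dim μⁱ`. The determinant of the images under `f` of
the corresponding brackets of `ν` is a polynomial in `ν` with value `1` at `μ`. If `dim λⁱ < d`, it
vanishes at every `ν` in the orbit of `λ`, because `dim νⁱ ≤ dim λⁱ`
(`finrank_lowerCentral_glAct_le`); so it vanishes at `μ`, a contradiction.
-/

open Filter Topology


/-- The lower central series of a law `ν`: `ν⁰ = V`,
`νⁱ = [ν, ν^{i-1}] = span {ν(x,y) : x ∈ V, y ∈ ν^{i-1}}`. -/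
noncomputable def lowerCentral {n : ℕ} (ν : BilMap n) : ℕ → Submodule ℂ (Fin n → ℂ)
  | 0 => ⊤
  | i + 1 => Submodule.span ℂ {z | ∃ x : Fin n → ℂ, ∃ y ∈ lowerCentral ν i, ν x y = z}

/-- The nested bracket `ν(e_{a₁}, ν(e_{a₂}, … ν(e_{aᵢ}, e_j)))` for `l = [a₁, …, aᵢ]`. -/
noncomputable def word {n : ℕ} (ν : BilMap n) (j : Fin n) : List (Fin n) → Fin n → ℂ
  | [] => Pi.single j 1
  | a :: l => ν (Pi.single a 1) (word ν j l)

/-- The coordinates of the nested bracket `word ν j l` as polynomials in the structure constants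
of `ν`. -/
noncomputable def wordPoly {n : ℕ} (j : Fin n) :
    List (Fin n) → Fin n → MvPolynomial (Fin n × Fin n × Fin n) ℂ
  | [] => fun k => MvPolynomial.C ((Pi.single j 1 : Fin n → ℂ) k)
  | a :: l => fun k => ∑ b, wordPoly j l b * MvPolynomial.X (a, b, k)

lemma linearMap_apply_eq_sum {n : ℕ} {M : Type*} [AddCommGroup M] [Module ℂ M]
    (f : (Fin n → ℂ) →ₗ[ℂ] M) (v : Fin n → ℂ) : f v = ∑ b, v b • f (Pi.single b 1) := by
  conv_lhs => rw [pi_eq_sum_univ' v]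
  simp only [map_sum, map_smul]

lemma eval_wordPoly {n : ℕ} (ν : BilMap n) (j : Fin n) (l : List (Fin n)) (k : Fin n) :
    MvPolynomial.eval (structConsts ν) (wordPoly j l k) = word ν j l k := by
  induction l generalizing k with
  | nil => simp [wordPoly, word]
  | cons a l ih =>
    rw [word, linearMap_apply_eq_sum]
    simp [wordPoly, ih, structConsts]

lemma word_mem_lowerCentral {n : ℕ} (ν : BilMap n) (j : Fin n) (l : List (Fin n)) :
    word ν j l ∈ lowerCentral ν l.length := by
  induction l with
  | nil => exact Submodule.mem_top
  | cons a l ih => exact Submodule.subset_span ⟨_, _, ih, rfl⟩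

lemma lowerCentral_le_span_word {n : ℕ} (ν : BilMap n) (i : ℕ) :
    lowerCentral ν i ≤ Submodule.span ℂ {z | ∃ j l, l.length = i ∧ word ν j l = z} := by
  induction i with
  | zero =>
    intro v _
    have h := linearMap_apply_eq_sum LinearMap.id v
    rw [LinearMap.id_apply] at h
    rw [h]
    exact Submodule.sum_mem _ fun b _ => Submodule.smul_mem _ _
      (Submodule.subset_span ⟨b, [], rfl, rfl⟩)
  | succ i ih =>
    refine Submodule.span_le.2 ?_
    rintro _ ⟨x, y, hy, rfl⟩
    rw [linearMap_apply_eq_sum ν x, LinearMap.sum_apply]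
    refine Submodule.sum_mem _ fun a _ => Submodule.smul_mem _ _ ?_
    refine Submodule.span_induction
      (p := fun y _ => ν (Pi.single a 1) y ∈ Submodule.span ℂ _) ?_ ?_ ?_ ?_ (ih hy)
    · rintro _ ⟨j, l, hl, rfl⟩
      exact Submodule.subset_span ⟨j, a :: l, by simp [hl], rfl⟩
    · simp
    · intro u v _ _ hu hv
      rw [map_add]
      exact Submodule.add_mem _ hu hv
    · intro c u _ hu
      rw [map_smul]
      exact Submodule.smul_mem _ _ hu

lemma lowerCentral_glAct_le {n : ℕ} (g : (Fin n → ℂ) ≃ₗ[ℂ] (Fin n → ℂ)) (ν : BilMap n) (i : ℕ) :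
    lowerCentral (glAct g ν) i ≤
      (lowerCentral ν i).map (g : (Fin n → ℂ) →ₗ[ℂ] (Fin n → ℂ)) := by
  induction i with
  | zero =>
    intro v _
    exact ⟨g.symm v, Submodule.mem_top, by simp⟩
  | succ i ih =>
    refine Submodule.span_le.2 ?_
    rintro _ ⟨x, y, hy, rfl⟩
    obtain ⟨u, hu, rfl⟩ := ih hy
    exact ⟨ν (g.symm x) u, Submodule.subset_span ⟨_, _, hu, rfl⟩, by simp [glAct]⟩

lemma finrank_lowerCentral_glAct_le {n : ℕ} (g : (Fin n → ℂ) ≃ₗ[ℂ] (Fin n → ℂ)) (ν : BilMap n)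
    (i : ℕ) : Module.finrank ℂ (lowerCentral (glAct g ν) i) ≤
      Module.finrank ℂ (lowerCentral ν i) :=
  (Submodule.finrank_mono (lowerCentral_glAct_le g ν i)).trans (Submodule.finrank_map_le _ _)

/-- If `λ →deg μ` is a degeneration of Lie algebra laws over `ℂ`, then
for every `i ≥ 0` the lower central series satisfies `dim λⁱ ≥ dim μⁱ`. -/
theorem lowerCentral_dim_ge_of_degeneration (n : ℕ) (lam mu : BilMap n)
    (hlam : IsLieLaw lam) (hmu : IsLieLaw mu)
    (hdeg : mu ∈ zariskiClosure (glOrbit lam)) :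
    ∀ i : ℕ, Module.finrank ℂ (lowerCentral mu i) ≤ Module.finrank ℂ (lowerCentral lam i) := by
  intro i
  by_contra! hlt
  obtain ⟨b, hbs, hspan, hli⟩ :=
    exists_linearIndependent ℂ {z | ∃ j l, l.length = i ∧ word mu j l = z}
  have : Fintype b := hli.setFinite.fintype
  classical
  choose j l hl hw using fun z : b => hbs z.2
  have hcard : Module.finrank ℂ (lowerCentral mu i) ≤ Fintype.card b := by
    refine (Submodule.finrank_mono (lowerCentral_le_span_word mu i)).trans ?_
    rw [← hspan]
    have h := finrank_span_eq_card hli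
    rw [Subtype.range_coe] at h
    exact h.le
  obtain ⟨f, hf⟩ := LinearMap.exists_leftInverse_of_injective
    (Fintype.linearCombination ℂ (Subtype.val : b → Fin n → ℂ))
    (LinearMap.ker_eq_bot.2 (hli.fintypeLinearCombination_injective))
  have hf' (z : b) : f z = Pi.single z 1 := by
    simpa using LinearMap.congr_fun hf (Pi.single z 1)
  -- Row `z` is `f` applied to the generic nested bracket whose value at `mu` is `z`.
  let P : Matrix b b (MvPolynomial (Fin n × Fin n × Fin n) ℂ) :=
    Matrix.of fun z k => ∑ c, wordPoly (j z) (l z) c * MvPolynomial.C (f (Pi.single c 1) k)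
  have hP (ν : BilMap n) : MvPolynomial.eval (structConsts ν) P.det =
      Matrix.det (Matrix.of fun z k => f (word ν (j z) (l z)) k) := by
    rw [RingHom.map_det]
    congr 1
    ext z k
    rw [Matrix.of_apply, linearMap_apply_eq_sum f]
    simp [P, eval_wordPoly]
  have hmu0 := hdeg P.det ?_
  · rw [hP] at hmu0
    have h1 : (Matrix.of fun z k => f (word mu (j z) (l z)) k) = (1 : Matrix b b ℂ) := by
      ext z k
      rw [Matrix.of_apply, hw, hf', Matrix.one_apply, Pi.single_apply]
      simp [eq_comm]
    rw [h1, Matrix.det_one] at hmu0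
    exact one_ne_zero hmu0
  · rintro _ ⟨g, rfl⟩
    by_contra hne
    rw [hP] at hne
    have hrows := Matrix.linearIndependent_rows_of_det_ne_zero hne
    have hind : LinearIndependent ℂ fun z => word (glAct g lam) (j z) (l z) :=
      LinearIndependent.of_comp f hrows
    have hle : Submodule.span ℂ (Set.range fun z => word (glAct g lam) (j z) (l z)) ≤
        lowerCentral (glAct g lam) i := by
      refine Submodule.span_le.2 ?_
      rintro _ ⟨z, rfl⟩
      have h := word_mem_lowerCentral (glAct g lam) (j z) (l z)
      rwa [hl z] at h
    have h := Submodule.finrank_mono hle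
    rw [finrank_span_eq_card hind] at h
    have := finrank_lowerCentral_glAct_le g lam i
    omega
end

section
/- If λ →deg μ is a degeneration of Lie algebra laws over ℂ, then for every i ≥ 0 the terms of the derived series satisfy dim λ^{(i)} ≥ dim μ^{(i)}, where λ^{(0)} = V and λ^{(i)} = [λ^{(i−1)}, λ^{(i−1)}] is the span of all λ(x,y) with x, y ∈ λ^{(i−1)}. -/
/-!
The `i`-th derived term of any law `ν` is spanned by the values at `ν` of a fixed set of polynomial
vectors in the structure constants: the fully bracketed words of depth `i` in the standard basis
(`span_eval_genericWords`). If `dim μ⁽ⁱ⁾ = r`, some `r` words have linearly independent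
values at `μ`, so composing the `n × r` matrix of these words with a left inverse of its value at
`μ` gives an `r × r` matrix of polynomials whose determinant is `1` at `μ`. The dimension of the
derived terms is constant on the orbit of `λ` (`lawDerivedSeries_glAct`), so if `dim λ⁽ⁱ⁾ < r` this
determinant vanishes on the orbit, hence at `μ` by the definition of the Zariski closure: a
contradiction.
-/

open Filter Topology


/-- The derived series of a law `ν`: `ν⁽⁰⁾ = V`,
`ν⁽ⁱ⁾ = [ν^{(i-1)}, ν^{(i-1)}] = span {ν(x,y) : x, y ∈ ν^{(i-1)}}`. -/
noncomputable def lawDerivedSeries {n : ℕ} (ν : BilMap n) : ℕ → Submodule ℂ (Fin n → ℂ)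
  | 0 => ⊤
  | i + 1 => Submodule.span ℂ
      {z | ∃ x ∈ lawDerivedSeries ν i, ∃ y ∈ lawDerivedSeries ν i, ν x y = z}


/-- The bracket of two polynomial vectors under the generic bilinear map, whose structure constants
are the indeterminates. -/
noncomputable def genericBracket {n : ℕ}
    (u v : Fin n → MvPolynomial (Fin n × Fin n × Fin n) ℂ) :
    Fin n → MvPolynomial (Fin n × Fin n × Fin n) ℂ :=
  fun k => ∑ p, ∑ q, u p * v q * MvPolynomial.X (p, q, k)

/-- The fully bracketed words of depth `i` in the standard basis vectors, for the generic bilinear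
map. -/
noncomputable def genericWords (n : ℕ) :
    ℕ → Set (Fin n → MvPolynomial (Fin n × Fin n × Fin n) ℂ)
  | 0 => Set.range fun a => Pi.single a 1
  | i + 1 => Set.image2 genericBracket (genericWords n i) (genericWords n i)

/-- The specialization of a polynomial vector at the structure constants of `ν`. -/
noncomputable def evalVec {n : ℕ} (ν : BilMap n)
    (u : Fin n → MvPolynomial (Fin n × Fin n × Fin n) ℂ) : Fin n → ℂ :=
  fun k => MvPolynomial.eval (structConsts ν) (u k)

lemma bilMap_apply_eq_sum {n : ℕ} (ν : BilMap n) (x y : Fin n → ℂ) (k : Fin n) :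
    ν x y k = ∑ p, ∑ q, x p * y q * structConsts ν (p, q, k) := by
  conv_lhs => rw [pi_eq_sum_univ' x, pi_eq_sum_univ' y]
  simp only [map_sum, LinearMap.sum_apply, map_smul, LinearMap.smul_apply, Finset.sum_apply,
    Pi.smul_apply, smul_eq_mul, structConsts, Finset.mul_sum, mul_assoc]
  rw [Finset.sum_comm]
  refine Finset.sum_congr rfl fun p _ => Finset.sum_congr rfl fun q _ => ?_
  have h (a : Fin n) : (fun j => if a = j then (1 : ℂ) else 0) = Pi.single a 1 := by
    ext j; simp [Pi.single_apply, eq_comm]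
  simp only [← h]
  ring

lemma evalVec_genericBracket {n : ℕ} (ν : BilMap n)
    (u v : Fin n → MvPolynomial (Fin n × Fin n × Fin n) ℂ) :
    evalVec ν (genericBracket u v) = ν (evalVec ν u) (evalVec ν v) := by
  ext k
  simp [bilMap_apply_eq_sum, evalVec, genericBracket]

lemma lawDerivedSeries_succ {n : ℕ} (ν : BilMap n) (i : ℕ) :
    lawDerivedSeries ν (i + 1) =
      Submodule.map₂ ν (lawDerivedSeries ν i) (lawDerivedSeries ν i) := by
  rw [Submodule.map₂_eq_span_image2]
  rfl

lemma span_eval_genericWords {n : ℕ} (ν : BilMap n) (i : ℕ) :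
    Submodule.span ℂ (evalVec ν '' genericWords n i) = lawDerivedSeries ν i := by
  induction i with
  | zero =>
    have h : evalVec ν '' genericWords n 0 = Set.range (Pi.basisFun ℂ (Fin n)) := by
      rw [genericWords, ← Set.range_comp]
      congr 1
      ext a k
      by_cases hk : k = a
      · subst hk; simp [evalVec]
      · simp [evalVec, hk]
    rw [h, Module.Basis.span_eq]
    rfl
  | succ i ih =>
    have h : evalVec ν '' genericWords n (i + 1) =
        Set.image2 (fun x y => ν x y) (evalVec ν '' genericWords n i)
          (evalVec ν '' genericWords n i) :=
      Set.image_image2_distrib (evalVec_genericBracket ν)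
    rw [lawDerivedSeries_succ, ← ih, Submodule.map₂_span_span, h]

lemma lawDerivedSeries_glAct {n : ℕ} (g : (Fin n → ℂ) ≃ₗ[ℂ] (Fin n → ℂ)) (ν : BilMap n) (i : ℕ) :
    lawDerivedSeries (glAct g ν) i =
      (lawDerivedSeries ν i).map (g : (Fin n → ℂ) →ₗ[ℂ] (Fin n → ℂ)) := by
  induction i with
  | zero => simp [lawDerivedSeries]
  | succ i ih =>
    rw [lawDerivedSeries_succ, lawDerivedSeries_succ, ih, Submodule.map₂_eq_span_image2,
      Submodule.map₂_eq_span_image2, Submodule.map_span, Submodule.map_coe, Set.image2_image_left,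
      Set.image2_image_right, Set.image_image2]
    simp [glAct]

/-- If `dim μ⁽ⁱ⁾ = r`, there is a polynomial in the structure constants that does not vanish at `μ`
but vanishes at every `ν` with `dim ν⁽ⁱ⁾ < r`. -/
lemma exists_separating_polynomial {n : ℕ} (mu : BilMap n) (i : ℕ) :
    ∃ p : MvPolynomial (Fin n × Fin n × Fin n) ℂ,
      MvPolynomial.eval (structConsts mu) p ≠ 0 ∧
      ∀ ν : BilMap n, Module.finrank ℂ (lawDerivedSeries ν i) <
        Module.finrank ℂ (lawDerivedSeries mu i) → MvPolynomial.eval (structConsts ν) p = 0 := by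
  rw [← span_eval_genericWords mu]
  obtain ⟨f, hf, -, hli⟩ :=
    Submodule.exists_fun_fin_finrank_span_eq ℂ (evalVec mu '' genericWords n i)
  generalize Module.finrank ℂ (Submodule.span ℂ (evalVec mu '' genericWords n i)) = r at f hf hli ⊢
  choose w hw hwf using hf
  obtain ⟨L, hL⟩ := (Fintype.linearCombination ℂ f).exists_leftInverse_of_injective
    (LinearMap.ker_eq_bot.2 (hli.fintypeLinearCombination_injective))
  have heval (ν : BilMap n) : MvPolynomial.eval (structConsts ν)
      (Matrix.of fun a b : Fin r => ∑ k, MvPolynomial.C (L.toMatrix' a k) * w b k).det =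
      (L.toMatrix' * Matrix.of fun k j => evalVec ν (w j) k).det := by
    rw [RingHom.map_det]
    congr 1
    ext a b
    simp [Matrix.mul_apply, evalVec]
  refine ⟨(Matrix.of fun a b : Fin r => ∑ k, MvPolynomial.C (L.toMatrix' a k) * w b k).det, ?_,
    fun ν hν => ?_⟩
  · have h1 : (L.toMatrix' * Matrix.of fun k j => evalVec mu (w j) k) = 1 := by
      rw [← LinearMap.toMatrix'_id, ← hL, LinearMap.toMatrix'_comp]
      congr 1
      ext k j
      simp [LinearMap.toMatrix'_apply, hwf]
    rw [heval, h1]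
    simp
  · rw [heval]
    by_contra hdet
    have hrank := Matrix.rank_of_isUnit _
      ((Matrix.isUnit_iff_isUnit_det _).2 (isUnit_iff_ne_zero.2 hdet))
    rw [Fintype.card_fin] at hrank
    have hle := Matrix.rank_mul_le_right L.toMatrix' (Matrix.of fun k j => evalVec ν (w j) k)
    rw [hrank, Matrix.rank_eq_finrank_span_cols] at hle
    refine absurd (hle.trans (Submodule.finrank_mono ?_)) (not_le.2 hν)
    rw [← span_eval_genericWords ν]
    refine Submodule.span_mono ?_
    rintro _ ⟨j, rfl⟩
    exact ⟨w j, hw j, rfl⟩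

/-- If `λ →deg μ` is a degeneration of Lie algebra laws over `ℂ`, then
for every `i ≥ 0` the derived series satisfies `dim λ⁽ⁱ⁾ ≥ dim μ⁽ⁱ⁾`. -/
theorem lawDerivedSeries_dim_ge_of_degeneration (n : ℕ) (lam mu : BilMap n)
    (hlam : IsLieLaw lam) (hmu : IsLieLaw mu)
    (hdeg : mu ∈ zariskiClosure (glOrbit lam)) :
    ∀ i : ℕ, Module.finrank ℂ (lawDerivedSeries mu i) ≤ Module.finrank ℂ (lawDerivedSeries lam i) := by
  intro i
  by_contra! hlt
  obtain ⟨p, hp, hvan⟩ := exists_separating_polynomial mu i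
  refine hp (hdeg p ?_)
  rintro _ ⟨g, rfl⟩
  refine hvan _ ?_
  rw [lawDerivedSeries_glAct, LinearEquiv.finrank_map_eq]
  exact hlt
end

section
/- If λ →deg μ is a degeneration of Lie algebra laws over ℂ, then the centers satisfy dim Z(λ) ≤ dim Z(μ), where Z(ν) = {x ∈ V : ν(x,y) = 0 for all y ∈ V}. -/
/-!
The center of `ν` is the kernel of the linear map `x ↦ ν(x, ·)`, whose matrix `structMatrix ν` has
the structure constants of `ν` as entries, so `dim Z(ν) = n - rank (structMatrix ν)`
(`finrank_lawCenter_add_rank`). The claim is therefore the lower semicontinuity of the rank in the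
Zariski topology. If `structMatrix μ` has rank `r`, choose constant matrices `P`, `Q` with
`P * structMatrix μ * Q = 1` of size `r` (`exists_mul_mul_eq_one`). The polynomial
`ν ↦ det (P * structMatrix ν * Q)` does not vanish at `μ`, hence it does not vanish at some `g • λ`,
and so `structMatrix (g • λ)` has rank at least `r`. Finally `Z(g • λ) = g(Z(λ))` has the
same dimension as `Z(λ)`.
-/

open Filter Topology


/-- The center of a law `ν`: `Z(ν) = {x ∈ V : ν(x,y) = 0 for all y}`. -/
noncomputable def lawCenter {n : ℕ} (ν : BilMap n) : Submodule ℂ (Fin n → ℂ) where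
  carrier := {x | ∀ y, ν x y = 0}
  add_mem' := by
    intro a b ha hb y
    simp [map_add, LinearMap.add_apply, ha y, hb y]
  zero_mem' := by simp
  smul_mem' := by
    intro c a ha y
    simp [map_smul, LinearMap.smul_apply, ha y]

/-- The matrix of `x ↦ ν(x, ·)` in the standard basis: the rows are indexed by the pairs `(j, k)`,
and the entry in column `i` is the `k`-th coordinate of `ν(e_i, e_j)`. -/
def structMatrix {n : ℕ} (ν : BilMap n) : Matrix (Fin n × Fin n) (Fin n) ℂ :=
  Matrix.of fun jk i => structConsts ν (i, jk)

theorem structMatrix_mulVec {n : ℕ} (ν : BilMap n) (x : Fin n → ℂ) (j k : Fin n) :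
    (structMatrix ν).mulVec x (j, k) = ν x (Pi.single j 1) k := by
  conv_rhs => rw [pi_eq_sum_univ' x]
  simp only [map_sum, map_smul, LinearMap.sum_apply, LinearMap.smul_apply, Finset.sum_apply,
    Pi.smul_apply, smul_eq_mul, Matrix.mulVec, dotProduct, structMatrix, Matrix.of_apply,
    structConsts]
  refine Finset.sum_congr rfl fun i _ => ?_
  rw [mul_comm]

theorem lawCenter_eq_ker {n : ℕ} (ν : BilMap n) :
    lawCenter ν = LinearMap.ker (structMatrix ν).mulVecLin := by
  ext x
  rw [LinearMap.mem_ker, Matrix.mulVecLin_apply]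
  change (∀ y, ν x y = 0) ↔ _
  constructor
  · intro h
    ext ⟨j, k⟩
    simp [structMatrix_mulVec, h]
  · intro h
    have h0 : ν x = 0 := by
      refine LinearMap.pi_ext' fun j => LinearMap.ext_ring ?_
      ext k
      simpa [structMatrix_mulVec] using congrFun h (j, k)
    simp [h0]

theorem finrank_lawCenter_add_rank {n : ℕ} (ν : BilMap n) :
    (structMatrix ν).rank + Module.finrank ℂ (lawCenter ν) = n := by
  rw [lawCenter_eq_ker, Matrix.rank, LinearMap.finrank_range_add_finrank_ker, Module.finrank_fin_fun]

theorem lawCenter_glAct {n : ℕ} (g : (Fin n → ℂ) ≃ₗ[ℂ] (Fin n → ℂ)) (ν : BilMap n) :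
    lawCenter (glAct g ν) = (lawCenter ν).map (g : (Fin n → ℂ) →ₗ[ℂ] (Fin n → ℂ)) := by
  ext x
  rw [Submodule.mem_map_equiv]
  change (∀ y, g (ν (g.symm x) (g.symm y)) = 0) ↔ ∀ y, ν (g.symm x) y = 0
  simp only [map_eq_zero_iff g g.injective]
  exact (g.symm.surjective.forall (p := fun y => ν (g.symm x) y = 0)).symm

/-- A matrix of rank `r` can be compressed to the identity matrix of size `r`: `Q` embeds `K ^ r` as
a complement of the kernel, and `P` is a left inverse of the injective map `A * Q`. -/
theorem exists_mul_mul_eq_one {K m n : Type*} [Field K] [Fintype m] [Fintype n] [DecidableEq m]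
    [DecidableEq n] (A : Matrix m n K) :
    ∃ (P : Matrix (Fin A.rank) m K) (Q : Matrix n (Fin A.rank) K), P * A * Q = 1 := by
  obtain ⟨s, hs⟩ := A.mulVecLin.rangeRestrict.exists_rightInverse_of_surjective
    A.mulVecLin.range_rangeRestrict
  let e : (Fin A.rank → K) ≃ₗ[K] LinearMap.range A.mulVecLin :=
    (Module.finBasis K (LinearMap.range A.mulVecLin)).equivFun.symm
  have hq : A.mulVecLin ∘ₗ (s ∘ₗ e.toLinearMap) = Submodule.subtype _ ∘ₗ e.toLinearMap := by
    ext1 v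
    ext1
    exact congrArg Subtype.val (LinearMap.congr_fun hs (e _))
  obtain ⟨p, hp⟩ := (A.mulVecLin ∘ₗ (s ∘ₗ e.toLinearMap)).exists_leftInverse_of_injective <| by
    rw [hq, LinearMap.ker_eq_bot]
    exact Subtype.val_injective.comp e.injective
  refine ⟨LinearMap.toMatrix' p, LinearMap.toMatrix' (s ∘ₗ e.toLinearMap), ?_⟩
  have hA : LinearMap.toMatrix' A.mulVecLin = A := LinearMap.toMatrix'_toLin' A
  rw [← LinearMap.toMatrix'_id, ← hp, LinearMap.toMatrix'_comp, LinearMap.toMatrix'_comp, hA,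
    Matrix.mul_assoc]

theorem exists_polynomial_eval_eq_det {n r : ℕ} (P : Matrix (Fin r) (Fin n × Fin n) ℂ)
    (Q : Matrix (Fin n) (Fin r) ℂ) :
    ∃ p : MvPolynomial (Fin n × Fin n × Fin n) ℂ, ∀ ν : BilMap n,
      MvPolynomial.eval (structConsts ν) p = (P * structMatrix ν * Q).det := by
  let X : Matrix (Fin n × Fin n) (Fin n) (MvPolynomial (Fin n × Fin n × Fin n) ℂ) :=
    Matrix.of fun jk i => MvPolynomial.X (i, jk)
  refine ⟨Matrix.det (P.map (MvPolynomial.C (σ := Fin n × Fin n × Fin n)) * X *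
    Q.map (MvPolynomial.C (σ := Fin n × Fin n × Fin n))), fun ν => ?_⟩
  have hP : (P.map MvPolynomial.C).map (MvPolynomial.eval (structConsts ν)) = P := by ext; simp
  have hX : X.map (MvPolynomial.eval (structConsts ν)) = structMatrix ν := by
    ext; simp [X, structMatrix]
  have hQ : (Q.map MvPolynomial.C).map (MvPolynomial.eval (structConsts ν)) = Q := by ext; simp
  rw [RingHom.map_det, RingHom.mapMatrix_apply, Matrix.map_mul, Matrix.map_mul, hP, hX, hQ]

/-- If `λ →deg μ` is a degeneration of Lie algebra laws over `ℂ`, then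
the centers satisfy `dim Z(λ) ≤ dim Z(μ)`. -/
theorem center_dim_le_of_degeneration (n : ℕ) (lam mu : BilMap n)
    (hlam : IsLieLaw lam) (hmu : IsLieLaw mu)
    (hdeg : mu ∈ zariskiClosure (glOrbit lam)) :
    Module.finrank ℂ (lawCenter lam) ≤ Module.finrank ℂ (lawCenter mu) := by
  obtain ⟨P, Q, hPQ⟩ := exists_mul_mul_eq_one (structMatrix mu)
  obtain ⟨p, hp⟩ := exists_polynomial_eval_eq_det P Q
  obtain ⟨g, hg⟩ : ∃ g, (P * structMatrix (glAct g lam) * Q).det ≠ 0 := by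
    by_contra! h
    have h0 := hdeg p <| by
      rintro _ ⟨g, rfl⟩
      exact (hp _).trans (h g)
    rw [hp, hPQ, Matrix.det_one] at h0
    exact one_ne_zero h0
  have hrank : (structMatrix mu).rank ≤ (structMatrix (glAct g lam)).rank := by
    have h1 := Matrix.rank_of_det_ne_zero hg
    rw [Fintype.card_fin] at h1
    exact h1.ge.trans ((Matrix.rank_mul_le_left _ _).trans (Matrix.rank_mul_le_right _ _))
  have hcenter : Module.finrank ℂ (lawCenter (glAct g lam)) = Module.finrank ℂ (lawCenter lam) := by
    rw [lawCenter_glAct]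
    exact LinearEquiv.finrank_map_eq g _
  have h1 := finrank_lawCenter_add_rank mu
  have h2 := finrank_lawCenter_add_rank (glAct g lam)
  omega
end

section
/- If λ →deg μ is a degeneration of Lie algebra laws over ℂ, then rank(λ) ≤ rank(μ), where the rank of a finite-dimensional complex Lie algebra is the dimension of a Cartan subalgebra (equivalently, the minimal multiplicity of the eigenvalue 0 of ad(x) as x ranges over the algebra). -/
/-!
The generalized `0`-eigenspace of an endomorphism has dimension equal to the order of vanishing
at `0` of its characteristic polynomial (`LinearMap.finrank_maxGenEigenspace_zero_eq`). Let `x`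
realise the rank `r` of `mu`, so that the coefficient of `T ^ r` in the characteristic polynomial
of `mu x` is nonzero. For this fixed `x`, the coefficient of `T ^ r` in the characteristic
polynomial of `ν x` is a polynomial in the structure constants of `ν` (`eval_charpolyCoeff`).
It does not vanish at `mu`, hence it cannot vanish on the whole orbit of `lam`, whose Zariski
closure contains `mu`. At a point `g · lam` where it is nonzero, the endomorphism `(g · lam) x`
is conjugate to `lam (g⁻¹ x)`, so the latter has a generalized `0`-eigenspace of dimension at most
`r`.
-/


open Filter Topology


/-- The rank of a law `ν`: the dimension of a Cartan subalgebra of `(V, ν)`,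
equivalently the minimal multiplicity of the eigenvalue `0` of `ad(x) = ν(x,·)`
as `x` ranges over the algebra (the multiplicity being the dimension of the
generalized `0`-eigenspace, over `ℂ`). -/
noncomputable def lawRank {n : ℕ} (ν : BilMap n) : ℕ :=
  ⨅ x : Fin n → ℂ,
    Module.finrank ℂ (Module.End.maxGenEigenspace (ν x : Module.End ℂ (Fin n → ℂ)) 0)

/-- The matrix of `ν x` (for fixed `x`) with the structure constants of `ν` as indeterminates. -/
noncomputable def genericMatrix {n : ℕ} (x : Fin n → ℂ) :
    Matrix (Fin n) (Fin n) (MvPolynomial (Fin n × Fin n × Fin n) ℂ) :=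
  Matrix.of fun k j => ∑ i, MvPolynomial.C (x i) * MvPolynomial.X (i, j, k)

lemma map_genericMatrix {n : ℕ} (ν : BilMap n) (x : Fin n → ℂ) :
    (genericMatrix x).map (MvPolynomial.eval (structConsts ν)) = LinearMap.toMatrix' (ν x) := by
  ext k j
  have hx : ν x = ∑ i, x i • ν (Pi.single i 1) := by
    conv_lhs => rw [pi_eq_sum_univ' x]
    simp only [map_sum, map_smul]
  simp [genericMatrix, structConsts, LinearMap.toMatrix'_apply, hx, LinearMap.sum_apply,
    Finset.sum_apply]

/-- For fixed `x`, each coefficient of the characteristic polynomial of `ν x` is a polynomial in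
the structure constants of `ν`. -/
lemma eval_charpolyCoeff {n : ℕ} (ν : BilMap n) (x : Fin n → ℂ) (r : ℕ) :
    MvPolynomial.eval (structConsts ν) ((genericMatrix x).charpoly.coeff r) =
      (LinearMap.charpoly (ν x)).coeff r := by
  rw [← LinearMap.charpoly_toMatrix (ν x) (Pi.basisFun ℂ (Fin n)), ← Polynomial.coeff_map,
    ← Matrix.charpoly_map]
  erw [map_genericMatrix]
  rfl

lemma charpoly_glAct {n : ℕ} (g : (Fin n → ℂ) ≃ₗ[ℂ] (Fin n → ℂ)) (ν : BilMap n)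
    (x : Fin n → ℂ) :
    LinearMap.charpoly (glAct g ν x) = LinearMap.charpoly (ν (g.symm x)) := by
  rw [← LinearEquiv.charpoly_conj g (ν (g.symm x))]
  rfl

/-- If `λ →deg μ` is a degeneration of Lie algebra laws over `ℂ`, then
`rank(λ) ≤ rank(μ)`. -/
theorem rank_le_of_degeneration (n : ℕ) (lam mu : BilMap n)
    (hlam : IsLieLaw lam) (hmu : IsLieLaw mu)
    (hdeg : mu ∈ zariskiClosure (glOrbit lam)) :
    lawRank lam ≤ lawRank mu := by
  obtain ⟨x, hx⟩ : ∃ x : Fin n → ℂ,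
      Module.finrank ℂ (Module.End.maxGenEigenspace (mu x : Module.End ℂ (Fin n → ℂ)) 0) =
        lawRank mu := ciInf_mem _
  rw [LinearMap.finrank_maxGenEigenspace_zero_eq] at hx
  have hne : (LinearMap.charpoly (mu x)).coeff (lawRank mu) ≠ 0 := by
    rw [← hx]
    exact Polynomial.trailingCoeff_nonzero_iff_nonzero.mpr (LinearMap.charpoly_monic _).ne_zero
  -- The coefficient does not vanish at `mu`, so it does not vanish somewhere on the orbit.
  obtain ⟨g, hg⟩ : ∃ g : (Fin n → ℂ) ≃ₗ[ℂ] (Fin n → ℂ),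
      (LinearMap.charpoly (glAct g lam x)).coeff (lawRank mu) ≠ 0 := by
    by_contra! h
    apply hne
    rw [← eval_charpolyCoeff]
    refine hdeg _ ?_
    rintro _ ⟨g, rfl⟩
    rw [eval_charpolyCoeff]
    exact h g
  rw [charpoly_glAct] at hg
  calc lawRank lam ≤ Module.finrank ℂ
        (Module.End.maxGenEigenspace (lam (g.symm x) : Module.End ℂ (Fin n → ℂ)) 0) :=
        ciInf_le' _ _
    _ = (LinearMap.charpoly (lam (g.symm x))).natTrailingDegree :=
        LinearMap.finrank_maxGenEigenspace_zero_eq _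
    _ ≤ lawRank mu := Polynomial.natTrailingDegree_le_of_ne_zero hg
end

section
/- The Heisenberg law is a degeneration of sl₂: in L₃(ℂ), the law ν of the Heisenberg Lie algebra n₃(ℂ), given on the standard basis by ν(e₁,e₂) = e₃ and all other basis brackets zero, lies in the Zariski closure of the orbit O(λ) of the law λ of sl₂(ℂ), given by λ(e₁,e₂) = e₃, λ(e₁,e₃) = −2e₁, λ(e₂,e₃) = 2e₂. -/
/-!
Heisenberg is the limit of `sl₂` under a one-parameter family of diagonal changes of basis. For
`t ≠ 0` put `g_t⁻¹ = diag(t, t, t²)`. Then `g_t · λ` keeps the bracket `(e₁,e₂) ↦ e₃` and scales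
the other two brackets by `t²`, giving `(e₁,e₃) ↦ -2t² e₁` and `(e₂,e₃) ↦ 2t² e₂`
(`contractedLaw_mem_glOrbit`). The structure constants of this family extend continuously to
`t = 0`, where the law is the Heisenberg law. A polynomial vanishing on the orbit is thus a
continuous function of `t` vanishing on the dense set `t ≠ 0`, hence also at `t = 0`.
-/


open Filter Topology


/-- The bilinear map determined by structure constants `c`, i.e.
`μ(e_i, e_j) = ∑_r c i j r • e_r`. -/
noncomputable def ofStructConsts {n : ℕ} (c : Fin n → Fin n → Fin n → ℂ) :
    (Fin n → ℂ) →ₗ[ℂ] (Fin n → ℂ) →ₗ[ℂ] (Fin n → ℂ) :=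
  LinearMap.mk₂ ℂ (fun x y r => ∑ i, ∑ j, x i * y j * c i j r)
    (fun x x' y => by
      funext r
      simp [add_mul, Finset.sum_add_distrib])
    (fun a x y => by
      funext r
      simp [Finset.mul_sum, mul_assoc])
    (fun x y y' => by
      funext r
      simp [mul_add, add_mul, Finset.sum_add_distrib])
    (fun a x y => by
      funext r
      simp [Finset.mul_sum]
      congr 1; funext i; congr 1; funext j; ring)

/-- The law of `sl₂(ℂ)`: `λ(e₁,e₂) = e₃`, `λ(e₁,e₃) = -2e₁`, `λ(e₂,e₃) = 2e₂`. -/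
noncomputable def sl2Law : BilMap 3 :=
  ofStructConsts ![![![0,0,0], ![0,0,1], ![-2,0,0]],
                   ![![0,0,-1], ![0,0,0], ![0,2,0]],
                   ![![2,0,0], ![0,-2,0], ![0,0,0]]]

/-- The law of the Heisenberg algebra `n₃(ℂ)`: `ν(e₁,e₂) = e₃`, all other basis
brackets zero. -/
noncomputable def heisenbergLaw : BilMap 3 :=
  ofStructConsts ![![![0,0,0], ![0,0,1], ![0,0,0]],
                   ![![0,0,-1], ![0,0,0], ![0,0,0]],
                   ![![0,0,0], ![0,0,0], ![0,0,0]]]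

/-- The curve of laws `(e₁,e₂) ↦ e₃`, `(e₁,e₃) ↦ -2t² e₁`, `(e₂,e₃) ↦ 2t² e₂`, joining the
Heisenberg law at `t = 0` to `sl₂` at `t = 1`. -/
noncomputable def contractedLaw (t : ℂ) : BilMap 3 :=
  ofStructConsts ![![![0,0,0], ![0,0,1], ![-2 * t ^ 2,0,0]],
                   ![![0,0,-1], ![0,0,0], ![0,2 * t ^ 2,0]],
                   ![![2 * t ^ 2,0,0], ![0,-2 * t ^ 2,0], ![0,0,0]]]

theorem contractedLaw_zero : contractedLaw 0 = heisenbergLaw := by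
  simp [contractedLaw, heisenbergLaw]

theorem structConsts_ofStructConsts {n : ℕ} (c : Fin n → Fin n → Fin n → ℂ)
    (t : Fin n × Fin n × Fin n) : structConsts (ofStructConsts c) t = c t.1 t.2.1 t.2.2 := by
  simp [structConsts, ofStructConsts, Pi.single_apply]

theorem contractedLaw_mem_glOrbit {t : ℂ} (ht : t ≠ 0) : contractedLaw t ∈ glOrbit sl2Law := by
  have hd : ∀ i, (![t, t, t ^ 2] : Fin 3 → ℂ) i ≠ 0 := by
    intro i
    fin_cases i <;> simp [ht]
  -- The scaling by `diag(t, t, t²)` is `g⁻¹`, so the group element is its inverse.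
  let h : (Fin 3 → ℂ) ≃ₗ[ℂ] (Fin 3 → ℂ) :=
    LinearEquiv.piCongrRight fun i => LinearEquiv.smulOfNeZero ℂ ℂ (![t, t, t ^ 2] i) (hd i)
  have h_apply : ∀ x i, h x i = ![t, t, t ^ 2] i * x i := fun x i => rfl
  refine ⟨h.symm, ?_⟩
  refine LinearMap.ext₂ fun x y => h.injective ?_
  have key : h (glAct h.symm sl2Law x y) = sl2Law (h x) (h y) := by
    simp [glAct]
  refine key.trans ?_
  funext r
  rw [h_apply]
  fin_cases r <;>
    simp [sl2Law, contractedLaw, ofStructConsts, Fin.sum_univ_three, h_apply] <;> ring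

theorem continuous_structConsts_contractedLaw :
    Continuous fun t : ℂ => structConsts (contractedLaw t) := by
  refine continuous_pi fun ⟨i, j, k⟩ => ?_
  simp only [contractedLaw, structConsts_ofStructConsts]
  fin_cases i <;> fin_cases j <;> fin_cases k <;> simp <;> fun_prop

/-- The Heisenberg law is a degeneration of `sl₂`: in `L₃(ℂ)` the law
of `n₃(ℂ)` lies in the Zariski closure of the orbit of the law of `sl₂(ℂ)`. -/
theorem heisenberg_degeneration_of_sl2 :
    heisenbergLaw ∈ zariskiClosure (glOrbit sl2Law) := by
  intro p hp
  have hcont : Continuous fun t : ℂ => MvPolynomial.eval (structConsts (contractedLaw t)) p :=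
    (MvPolynomial.continuous_eval p).comp continuous_structConsts_contractedLaw
  have hzero : (fun t : ℂ => MvPolynomial.eval (structConsts (contractedLaw t)) p) = fun _ => 0 :=
    hcont.ext_on (dense_compl_singleton 0) continuous_const
      fun t ht => hp _ (contractedLaw_mem_glOrbit ht)
  simpa only [contractedLaw_zero] using congrFun hzero 0
end

section
/- The law r_{3,−1} is a degeneration of sl₂: in L₃(ℂ), the law μ given on the standard basis by μ(e₁,e₂) = e₂, μ(e₁,e₃) = −e₃ and μ(e₂,e₃) = 0 lies in the Zariski closure of the orbit O(λ) of the law λ of sl₂(ℂ), given by λ(e₁,e₂) = e₃, λ(e₁,e₃) = −2e₁, λ(e₂,e₃) = 2e₂. -/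
/-!
With `h = e₃`, the basis `f₁ = h/2`, `f₂ = e₁`, `f₃ = t e₂` of `sl₂` (for `t ≠ 0`) satisfies
`[f₁,f₂] = f₂`, `[f₁,f₃] = -f₃`, `[f₂,f₃] = 2t f₁`. So the law `contractionLaw t` with these structure
constants lies in the orbit of `sl₂` for every `t ≠ 0` (`contractionLaw_mem_orbit`), and
at `t = 0` it is `r_{3,-1}`. A polynomial vanishing on the orbit restricts to a continuous function
of `t` that vanishes on the dense set `t ≠ 0`, hence also at `t = 0`.
-/

open Filter Topology


/-- The law of `r_{3,-1}(ℂ)`: `μ(e₁,e₂) = e₂`, `μ(e₁,e₃) = -e₃`, `μ(e₂,e₃) = 0`. -/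
noncomputable def r3m1Law : BilMap 3 :=
  ofStructConsts ![![![0,0,0], ![0,1,0], ![0,0,-1]],
                   ![![0,-1,0], ![0,0,0], ![0,0,0]],
                   ![![0,0,1], ![0,0,0], ![0,0,0]]]

/-- The one-parameter family of laws `ν(e₁,e₂) = e₂`, `ν(e₁,e₃) = -e₃`, `ν(e₂,e₃) = 2t e₁`. -/
noncomputable def contractionLaw (t : ℂ) : BilMap 3 :=
  ofStructConsts ![![![0,0,0], ![0,1,0], ![0,0,-1]],
                   ![![0,-1,0], ![0,0,0], ![2*t,0,0]],
                   ![![0,0,1], ![-(2*t),0,0], ![0,0,0]]]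

theorem contractionLaw_zero : contractionLaw 0 = r3m1Law := by
  simp [contractionLaw, r3m1Law]

/-- The change of basis whose inverse sends `e₁, e₂, e₃` to `e₃/2, e₁, t e₂`. -/
noncomputable def contractionEquiv (t : ℂ) (ht : t ≠ 0) : (Fin 3 → ℂ) ≃ₗ[ℂ] (Fin 3 → ℂ) where
  toFun y := ![2 * y 2, y 0, t⁻¹ * y 1]
  invFun x := ![x 1, t * x 2, 2⁻¹ * x 0]
  map_add' x y := by
    ext i; fin_cases i <;> simp [mul_add]
  map_smul' a x := by
    ext i; fin_cases i <;> simp [mul_left_comm]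
  left_inv x := by
    ext i; fin_cases i <;> simp [ht]
  right_inv x := by
    ext i; fin_cases i <;> simp [ht]

theorem contractionLaw_mem_orbit (t : ℂ) (ht : t ≠ 0) :
    contractionLaw t ∈ glOrbit sl2Law := by
  refine ⟨contractionEquiv t ht, ?_⟩
  refine LinearMap.ext fun x => LinearMap.ext fun y => funext fun i => ?_
  fin_cases i <;>
    simp [glAct, contractionEquiv, contractionLaw, sl2Law, ofStructConsts,
      Fin.sum_univ_three] <;>
    field_simp <;> ring

theorem continuous_structConsts_contractionLaw :
    Continuous fun t => structConsts (contractionLaw t) := by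
  refine continuous_pi fun ⟨i, j, k⟩ => ?_
  fin_cases i <;> fin_cases j <;> fin_cases k <;>
    simp [structConsts, contractionLaw, ofStructConsts, Fin.sum_univ_three] <;> fun_prop

/-- The law `r_{3,-1}` is a degeneration of `sl₂`: in `L₃(ℂ)` the law
with `μ(e₁,e₂) = e₂`, `μ(e₁,e₃) = -e₃`, `μ(e₂,e₃) = 0` lies in the Zariski closure of
the orbit of the law of `sl₂(ℂ)`. -/
theorem r3m1_degeneration_of_sl2 :
    r3m1Law ∈ zariskiClosure (glOrbit sl2Law) := by
  intro p hp
  have hclosed : IsClosed {t : ℂ | MvPolynomial.eval (structConsts (contractionLaw t)) p = 0} :=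
    isClosed_eq ((MvPolynomial.continuous_eval p).comp continuous_structConsts_contractionLaw)
      continuous_const
  have hsub : ({0}ᶜ : Set ℂ) ⊆
      {t : ℂ | MvPolynomial.eval (structConsts (contractionLaw t)) p = 0} :=
    fun t ht => hp _ (contractionLaw_mem_orbit t ht)
  have h0 := hclosed.closure_subset_iff.2 hsub (dense_compl_singleton (0 : ℂ) 0)
  rw [← contractionLaw_zero]
  exact h0
end

section
/- The Lie algebra h₃ ⊕ ℂ^{n−3} degenerates only to the abelian Lie algebra: let n ≥ 3 and let λ ∈ L_n(ℂ) be the law of h₃ ⊕ ℂ^{n−3}, given on the standard basis by λ(e₁,e₂) = e₃ and all other basis brackets zero, where h₃ is the 3-dimensional Heisenberg Lie algebra. If μ lies in the Zariski closure of the orbit O(λ), then either μ ∈ O(λ) (i.e., μ is isomorphic to λ) or μ = 0 is the abelian law. -/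
/-!
Every law in the orbit of `h₃ ⊕ ℂ^{n-3}` has the form `(x, y) ↦ (α x * β y - β x * α y) • v` with
`α, β` linear forms and `v` a vector killed by both. Three families of quadratic equations in the
structure constants hold for all such laws, hence on the Zariski closure:

* any two values are proportional (`prop_eq`);
* the Plücker relation, which says that a scalar-valued alternating form is decomposable
  (`plucker_eq`);
* two-step nilpotency, `μ (μ x y) z = 0` (`nil_eq`).

Conversely let `μ ≠ 0` be alternating and satisfy these equations, say `v = μ a b ≠ 0`. By
proportionality `μ x y = ω x y • v` for a scalar alternating form `ω` with `ω a b = 1`; the Plücker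
relation for `(a, b, x, y)` gives `ω = α ∧ β` with `α = -ω b` and `β = ω a`; nilpotency gives
`α v = β v = 0`. Thus `a, b` are dual to `α, β` and `v` is a nonzero vector of `ker α ⊓ ker β`, so a
linear automorphism carries `(α, β, v)` to (first coordinate, second coordinate, `e₃`)
(`exists_adapted_equiv`), and it exhibits `μ` as a member of the orbit.
-/

open Filter Topology


/-- The law of `h₃ ⊕ ℂ^{n-3}` on `ℂⁿ` (`n ≥ 3`): `λ(e₁,e₂) = e₃` and all other basis
brackets zero, where `h₃` is the 3-dimensional Heisenberg Lie algebra. -/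
noncomputable def heisPlusAbelianLaw (n : ℕ) (hn : 3 ≤ n) : BilMap n :=
  ofStructConsts fun i j r =>
    if i = (⟨0, by omega⟩ : Fin n) ∧ j = (⟨1, by omega⟩ : Fin n) ∧ r = (⟨2, by omega⟩ : Fin n)
      then 1
    else if i = (⟨1, by omega⟩ : Fin n) ∧ j = (⟨0, by omega⟩ : Fin n) ∧ r = (⟨2, by omega⟩ : Fin n)
      then -1
    else 0

/-! ### Normal form of a triple `(α, β, v)` -/

section NormalForm

variable {V : Type*} [AddCommGroup V] [Module ℂ V]

/-- The splitting `V ≃ ℂ² × (ker α ⊓ ker β)` given by vectors `a, b` dual to the forms `α, β`;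
the `ℂ²`-component is `(α, β)`. -/
noncomputable def splitEquiv (α β : V →ₗ[ℂ] ℂ) (a b : V) (haa : α a = 1) (hab : α b = 0)
    (hba : β a = 0) (hbb : β b = 1) :
    V ≃ₗ[ℂ] (ℂ × ℂ) × ↥(LinearMap.ker α ⊓ LinearMap.ker β) where
  toFun x := ((α x, β x), ⟨x - α x • a - β x • b, by simp [haa, hab, hba, hbb]⟩)
  map_add' x y := by
    ext
    · simp
    · simp
    · simp only [map_add, Prod.snd_add, Submodule.coe_add]; module
  map_smul' c x := by
    ext
    · simp
    · simp
    · simp only [map_smul, smul_eq_mul, RingHom.id_apply, Prod.smul_snd, Submodule.coe_smul]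
      module
  invFun p := p.1.1 • a + p.1.2 • b + p.2
  left_inv x := by simp
  right_inv p := by
    obtain ⟨⟨s, t⟩, ⟨k, hk⟩⟩ := p
    have h1 : α k = 0 := hk.1
    have h2 : β k = 0 := hk.2
    ext
    · simp [haa, hab, h1]
    · simp [hba, hbb, h2]
    · simp only [map_add, map_smul, haa, hab, hba, hbb, h1, h2, smul_eq_mul]
      module

/-- The general linear group acts transitively on nonzero vectors. -/
lemma exists_equiv_apply_eq {W : Type*} [AddCommGroup W] [Module ℂ W] {x y : W}
    (hx : x ≠ 0) (hy : y ≠ 0) : ∃ g : W ≃ₗ[ℂ] W, g x = y := by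
  obtain ⟨g, hg⟩ := Submodule.exists_linearEquiv_restrict_eq
    ((LinearEquiv.toSpanNonzeroSingleton ℂ W x hx).symm ≪≫ₗ
      LinearEquiv.toSpanNonzeroSingleton ℂ W y hy)
  refine ⟨g, ?_⟩
  have h := hg (LinearEquiv.toSpanNonzeroSingleton ℂ W x hx 1)
  simp only [LinearEquiv.trans_apply, LinearEquiv.symm_apply_apply] at h
  simpa using h.symm

/-- Any two quintuples `(α, β, a, b, v)` with `a, b` dual to `α, β` and `0 ≠ v ∈ ker α ⊓ ker β`
are related on the triples `(α, β, v)` by a linear automorphism. -/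
lemma exists_adapted_equiv [FiniteDimensional ℂ V] (α β α' β' : V →ₗ[ℂ] ℂ) (a b v a' b' v' : V)
    (haa : α a = 1) (hab : α b = 0) (hba : β a = 0) (hbb : β b = 1)
    (haa' : α' a' = 1) (hab' : α' b' = 0) (hba' : β' a' = 0) (hbb' : β' b' = 1)
    (hα : α v = 0) (hβ : β v = 0) (hv : v ≠ 0)
    (hα' : α' v' = 0) (hβ' : β' v' = 0) (hv' : v' ≠ 0) :
    ∃ f : V ≃ₗ[ℂ] V, (∀ x, α' (f x) = α x) ∧ (∀ x, β' (f x) = β x) ∧ f v = v' := by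
  let S := splitEquiv α β a b haa hab hba hbb
  let S' := splitEquiv α' β' a' b' haa' hab' hba' hbb'
  have hrank : Module.finrank ℂ ↥(LinearMap.ker α ⊓ LinearMap.ker β) =
      Module.finrank ℂ ↥(LinearMap.ker α' ⊓ LinearMap.ker β') := by
    have h := S.finrank_eq
    have h' := S'.finrank_eq
    rw [Module.finrank_prod] at h h'
    omega
  let Φ := LinearEquiv.ofFinrankEq _ _ hrank
  let k : ↥(LinearMap.ker α ⊓ LinearMap.ker β) := ⟨v, hα, hβ⟩
  let k' : ↥(LinearMap.ker α' ⊓ LinearMap.ker β') := ⟨v', hα', hβ'⟩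
  have hk : Φ k ≠ 0 := by
    rw [Ne, LinearEquiv.map_eq_zero_iff]
    exact fun h => hv (congrArg Subtype.val h)
  have hk' : k' ≠ 0 := fun h => hv' (congrArg Subtype.val h)
  obtain ⟨g, hg⟩ := exists_equiv_apply_eq hk hk'
  let f : V ≃ₗ[ℂ] V := S ≪≫ₗ (LinearEquiv.refl ℂ (ℂ × ℂ)).prodCongr (Φ ≪≫ₗ g) ≪≫ₗ S'.symm
  have hf : ∀ x, S' (f x) = ((α x, β x), g (Φ (S x).2)) := by
    intro x
    simp only [f, LinearEquiv.trans_apply, LinearEquiv.apply_symm_apply]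
    rfl
  refine ⟨f, fun x => congrArg (fun p => p.1.1) (hf x), fun x => congrArg (fun p => p.1.2) (hf x),
    S'.injective ?_⟩
  have h1 : (S v).2 = k := Subtype.ext (by simp [S, splitEquiv, hα, hβ, k])
  have h2 : (S' v').2 = k' := Subtype.ext (by simp [S', splitEquiv, hα', hβ', k'])
  rw [hf, h1, hg, ← h2, hα, hβ]
  refine Prod.ext (Prod.ext ?_ ?_) rfl
  · exact hα'.symm
  · exact hβ'.symm

end NormalForm

/-! ### Laws in the orbit -/

lemma heis_apply (n : ℕ) (hn : 3 ≤ n) (x y : Fin n → ℂ) :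
    heisPlusAbelianLaw n hn x y =
      (x ⟨0, by omega⟩ * y ⟨1, by omega⟩ - x ⟨1, by omega⟩ * y ⟨0, by omega⟩) •
        Pi.single (⟨2, by omega⟩ : Fin n) (1 : ℂ) := by
  funext r
  have key : ∀ i j : Fin n, x i * y j *
      (if i = (⟨0, by omega⟩ : Fin n) ∧ j = (⟨1, by omega⟩ : Fin n) ∧ r = (⟨2, by omega⟩ : Fin n)
        then 1
      else if i = (⟨1, by omega⟩ : Fin n) ∧ j = (⟨0, by omega⟩ : Fin n) ∧
        r = (⟨2, by omega⟩ : Fin n) then -1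
      else (0 : ℂ)) =
      (if i = (⟨0, by omega⟩ : Fin n) then (if j = (⟨1, by omega⟩ : Fin n) then
        x i * y j * (if r = (⟨2, by omega⟩ : Fin n) then 1 else 0) else 0) else 0) -
      (if i = (⟨1, by omega⟩ : Fin n) then (if j = (⟨0, by omega⟩ : Fin n) then
        x i * y j * (if r = (⟨2, by omega⟩ : Fin n) then 1 else 0) else 0) else 0) := by
    intro i j
    have h01 : (⟨0, by omega⟩ : Fin n) ≠ ⟨1, by omega⟩ := by simp
    by_cases h0 : i = (⟨0, by omega⟩ : Fin n)
    · subst h0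
      by_cases h1 : j = (⟨1, by omega⟩ : Fin n) <;> by_cases h2 : r = (⟨2, by omega⟩ : Fin n) <;>
        simp [h1, h2]
    · by_cases h1 : i = (⟨1, by omega⟩ : Fin n) <;> by_cases h3 : j = (⟨0, by omega⟩ : Fin n) <;>
        by_cases h2 : r = (⟨2, by omega⟩ : Fin n) <;> simp [h0, h1, h2, h3]
  change (∑ i : Fin n, ∑ j : Fin n, _) = _
  simp only [key, Finset.sum_sub_distrib]
  simp only [Finset.sum_ite_eq', Finset.sum_ite_irrel, Finset.sum_const_zero, Finset.mem_univ, if_true,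
    Pi.smul_apply, Pi.single_apply, smul_eq_mul, sub_mul]

/-- Laws in the orbit are of the form `(α ∧ β) ⊗ v` with `v ∈ ker α ⊓ ker β`. -/
lemma orbit_form {n : ℕ} {hn : 3 ≤ n} {ν : BilMap n}
    (hν : ν ∈ glOrbit (heisPlusAbelianLaw n hn)) :
    ∃ (α β : (Fin n → ℂ) →ₗ[ℂ] ℂ) (v : Fin n → ℂ), α v = 0 ∧ β v = 0 ∧
      ∀ x y, ν x y = (α x * β y - β x * α y) • v := by
  obtain ⟨g, rfl⟩ := hν
  refine ⟨LinearMap.proj ⟨0, by omega⟩ ∘ₗ g.symm.toLinearMap,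
    LinearMap.proj ⟨1, by omega⟩ ∘ₗ g.symm.toLinearMap,
    g (Pi.single (⟨2, by omega⟩ : Fin n) (1 : ℂ)), ?_, ?_, ?_⟩
  · simp
  · simp
  · intro x y
    simp [glAct, heis_apply]

/-! ### Equations of the closure -/

/-- The linear polynomial in the structure constants whose value at `ν` is the `r`-th coordinate
of `ν x y`. -/
noncomputable def coordPoly {n : ℕ} (x y : Fin n → ℂ) (r : Fin n) :
    MvPolynomial (Fin n × Fin n × Fin n) ℂ :=
  ∑ i, ∑ j, MvPolynomial.C (x i * y j) * MvPolynomial.X (i, j, r)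

lemma eval_coordPoly {n : ℕ} (ν : BilMap n) (x y : Fin n → ℂ) (r : Fin n) :
    MvPolynomial.eval (structConsts ν) (coordPoly x y r) = ν x y r := by
  conv_rhs => rw [pi_eq_sum_univ' x, pi_eq_sum_univ' y]
  simp only [coordPoly, map_sum, map_mul, MvPolynomial.eval_C, MvPolynomial.eval_X, structConsts,
    LinearMap.sum_apply, map_smul, LinearMap.smul_apply, Finset.sum_apply, Pi.smul_apply,
    smul_eq_mul, Finset.mul_sum]
  rw [Finset.sum_comm]
  refine Finset.sum_congr rfl fun j _ => Finset.sum_congr rfl fun i _ => ?_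
  have h : ∀ i : Fin n, (Pi.single i 1 : Fin n → ℂ) = fun k => if k = i then 1 else 0 := by
    intro i; funext k; simp [Pi.single_apply]
  simp [h]
  ring

section Closure

variable {n : ℕ} {hn : 3 ≤ n} {mu : BilMap n}

lemma prop_eq (hdeg : mu ∈ zariskiClosure (glOrbit (heisPlusAbelianLaw n hn)))
    (x y z w : Fin n → ℂ) (r s : Fin n) : mu x y r * mu z w s = mu x y s * mu z w r := by
  have h := hdeg (coordPoly x y r * coordPoly z w s - coordPoly x y s * coordPoly z w r) (by
    intro ν hν
    obtain ⟨α, β, v, -, -, h⟩ := orbit_form hν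
    simp only [map_sub, map_mul, eval_coordPoly, h, Pi.smul_apply, smul_eq_mul]
    ring)
  simp only [map_sub, map_mul, eval_coordPoly] at h
  exact sub_eq_zero.mp h

lemma plucker_eq (hdeg : mu ∈ zariskiClosure (glOrbit (heisPlusAbelianLaw n hn)))
    (x y z w : Fin n → ℂ) (r s : Fin n) :
    mu x y r * mu z w s - mu x z r * mu y w s + mu x w r * mu y z s = 0 := by
  have h := hdeg (coordPoly x y r * coordPoly z w s - coordPoly x z r * coordPoly y w s +
      coordPoly x w r * coordPoly y z s) (by
    intro ν hν
    obtain ⟨α, β, v, -, -, h⟩ := orbit_form hν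
    simp only [map_add, map_sub, map_mul, eval_coordPoly, h, Pi.smul_apply, smul_eq_mul]
    ring)
  simpa only [map_add, map_sub, map_mul, eval_coordPoly] using h

lemma nil_eq (hdeg : mu ∈ zariskiClosure (glOrbit (heisPlusAbelianLaw n hn)))
    (x y z : Fin n → ℂ) : mu (mu x y) z = 0 := by
  funext s
  -- Expanding the inner bracket in the standard basis makes the condition polynomial.
  have key : ∀ ν : BilMap n, MvPolynomial.eval (structConsts ν)
      (∑ i, coordPoly x y i * coordPoly (Pi.single i 1) z s) = ν (ν x y) z s := by
    intro ν
    have hx : ν x y = ∑ i, ν x y i • (Pi.single i 1 : Fin n → ℂ) := by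
      funext k
      simp [Pi.single_apply]
    conv_rhs => rw [hx]
    simp only [map_sum, map_mul, eval_coordPoly, LinearMap.sum_apply, map_smul,
      LinearMap.smul_apply, Finset.sum_apply, Pi.smul_apply, smul_eq_mul]
  have h := hdeg _ (fun ν hν => by
    rw [key]
    obtain ⟨α, β, v, hα, hβ, h⟩ := orbit_form hν
    simp [h, hα, hβ])
  rwa [key] at h

end Closure

/-- The Lie algebra `h₃ ⊕ ℂ^{n-3}` degenerates only to the abelian Lie
algebra: if a law `μ ∈ L_n(ℂ)` lies in the Zariski closure of the orbit of the law of
`h₃ ⊕ ℂ^{n-3}`, then either `μ` lies in the orbit (`μ` is isomorphic to it) or `μ = 0`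
is the abelian law. -/
theorem heisenberg_degenerates_only_to_abelian (n : ℕ) (hn : 3 ≤ n)
    (mu : BilMap n) (hmu : IsLieLaw mu)
    (hdeg : mu ∈ zariskiClosure (glOrbit (heisPlusAbelianLaw n hn))) :
    mu ∈ glOrbit (heisPlusAbelianLaw n hn) ∨ mu = 0 := by
  by_cases h0 : mu = 0
  · exact Or.inr h0
  left
  obtain ⟨a, b, r, hr⟩ : ∃ a b r, mu a b r ≠ 0 := by
    by_contra! h
    exact h0 (LinearMap.ext fun a => LinearMap.ext fun b => funext fun r => h a b r)
  have halt : ∀ x y, mu x y r = -mu y x r := by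
    intro x y
    have h := hmu.1 (x + y)
    simp only [map_add, LinearMap.add_apply, hmu.1, zero_add, add_zero] at h
    have h' := congrFun h r
    simp only [Pi.add_apply, Pi.zero_apply] at h'
    linear_combination h'
  have hself : ∀ x, mu x x r = 0 := fun x => by rw [hmu.1]; rfl
  -- `c x` is the form `ω x`, where `mu x y = ω x y • mu a b`.
  let c : (Fin n → ℂ) → (Fin n → ℂ) →ₗ[ℂ] ℂ := fun x =>
    (mu a b r)⁻¹ • (LinearMap.proj r ∘ₗ mu x)
  have hc : ∀ x y, c x y = (mu a b r)⁻¹ * mu x y r := fun x y => rfl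
  let i0 : Fin n := ⟨0, by omega⟩
  let i1 : Fin n := ⟨1, by omega⟩
  let i2 : Fin n := ⟨2, by omega⟩
  have h01 : i0 ≠ i1 := by simp [i0, i1]
  have h02 : i0 ≠ i2 := by simp [i0, i2]
  have h12 : i1 ≠ i2 := by simp [i1, i2]
  have hv : mu a b ≠ 0 := fun h => hr (by rw [h]; rfl)
  have hnil : ∀ x, mu x (mu a b) r = 0 := fun x => by
    rw [halt, nil_eq hdeg, Pi.zero_apply, neg_zero]
  obtain ⟨f, hf0, hf1, hf2⟩ := exists_adapted_equiv (-c b) (c a)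
    (LinearMap.proj i0) (LinearMap.proj i1) a b (mu a b)
    (Pi.single i0 1) (Pi.single i1 1) (Pi.single i2 (1 : ℂ))
    (by rw [LinearMap.neg_apply, hc, halt b a]; field_simp)
    (by simp [hc, hself]) (by simp [hc, hself]) (by rw [hc]; field_simp)
    (by simp) (by simp [h01]) (by simp [h01.symm]) (by simp)
    (by simp [hc, hnil]) (by simp [hc, hnil]) hv
    (by simp [h02]) (by simp [h12]) (by simp)
  refine ⟨f.symm, LinearMap.ext fun x => LinearMap.ext fun y => ?_⟩
  have hf0' : ∀ x, f x i0 = -c b x := hf0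
  have hf1' : ∀ x, f x i1 = c a x := hf1
  have hsymm : f.symm (Pi.single i2 1) = mu a b := by rw [← hf2, f.symm_apply_apply]
  have hmain : glAct f.symm (heisPlusAbelianLaw n hn) x y =
      (f x i0 * f y i1 - f x i1 * f y i0) • f.symm (Pi.single i2 1) := by
    simp [glAct, heis_apply, i0, i1, i2]
  refine hmain.trans ?_
  rw [hsymm, hf0', hf0', hf1', hf1']
  funext s
  simp only [Pi.smul_apply, smul_eq_mul, hc]
  have hpl := plucker_eq hdeg a b x y r r
  have hpr := prop_eq hdeg a b x y r s
  field_simp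
  linear_combination (-mu a b s) * hpl - mu a b r * hpr
end
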